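/- arXiv:1311.4676 — 8 statements merged into one kernel-verified Lean document; each statement's English description precedes it below -/
import Mathlib

section
/- Let K be a perfect field, n ≥ 2 an integer, and α_2, …, α_n pairwise distinct elements of K. Let R be the localization of the polynomial ring K[X] away from the element q := (X − α_2)⋯(X − α_n), i.e., R = K[X][1/q] (for n = 2 the product consists of the single factor X − α_2). Then every element of R is a finite sum of units of R, and for every positive integer N there exists an element of R that is not a sum of at most N units of R (i.e., u(R) = ω). -/
/-- The unit sum number of `R` is `ω`: every element of `R` is a (nonempty) finite sum of
units, but for every positive `N` some element of `R` is not a sum of at most `N` units. -/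
def UnitSumNumberOmega (R : Type*) [CommRing R] : Prop :=
  (∀ r : R, ∃ (k : ℕ) (e : Fin k → Rˣ), 1 ≤ k ∧ r = ∑ i, (e i : R)) ∧
  ∀ N : ℕ, 0 < N →
    ∃ r : R, ¬ ∃ (k : ℕ) (e : Fin k → Rˣ), 1 ≤ k ∧ k ≤ N ∧ r = ∑ i, (e i : R)

open Polynomial in
theorem units_mem_aux {K : Type*} [Field K] {ι : Type*} [Fintype ι] (α : ι → K)
    {R : Type*} [CommRing R] [Algebra K[X] R] [IsLocalization.Away (∏ i, (X - C (α i))) R]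
    (H : Subgroup Rˣ)
    (hC : ∀ (c : K) (u : Rˣ), (u : R) = algebraMap K[X] R (C c) → u ∈ H)
    (hX : ∀ (i : ι) (u : Rˣ), (u : R) = algebraMap K[X] R (X - C (α i)) → u ∈ H)
    (u : Rˣ) : u ∈ H := by
  set q : K[X] := ∏ i, (X - C (α i)) with hq
  have hq0 : q ≠ 0 := Finset.prod_ne_zero_iff.2 fun i _ => X_sub_C_ne_zero _
  have hqs : q.Splits := Splits.prod fun i _ => Splits.X_sub_C _
  have hinj : Function.Injective (algebraMap K[X] R) :=
    IsLocalization.injective R (powers_le_nonZeroDivisors_of_noZeroDivisors hq0)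
  let S : Submonoid R := H.toSubmonoid.map (Units.coeHom R)
  have hS : ∀ v : Rˣ, (v : R) ∈ S → v ∈ H := by
    rintro v ⟨w, hw, h⟩
    have : w = v := Units.ext h
    exact this ▸ hw
  have hqu : IsUnit (algebraMap K[X] R q) := IsLocalization.Away.algebraMap_isUnit q
  have hXS : ∀ i, algebraMap K[X] R (X - C (α i)) ∈ S := by
    intro i
    have : IsUnit (algebraMap K[X] R (X - C (α i))) := by
      refine isUnit_of_dvd_unit (map_dvd _ ?_) hqu
      exact Finset.dvd_prod_of_mem _ (Finset.mem_univ i)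
    obtain ⟨w, hw⟩ := this
    exact ⟨w, hX i w hw, hw⟩
  have hCS : ∀ c : K, c ≠ 0 → algebraMap K[X] R (C c) ∈ S := by
    intro c hc
    have : IsUnit (algebraMap K[X] R (C c)) := ((isUnit_C.2 hc.isUnit).map _)
    obtain ⟨w, hw⟩ := this
    exact ⟨w, hC c w hw, hw⟩
  have key : ∀ (m : ℕ) (a : K[X]), a ∣ q ^ m → algebraMap K[X] R a ∈ S := by
    intro m a ha
    have hqm : q ^ m ≠ 0 := pow_ne_zero _ hq0
    have ha0 : a ≠ 0 := fun h => hqm (by rw [h] at ha; exact zero_dvd_iff.1 ha)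
    have hsp : a.Splits := Splits.of_dvd (hqs.pow m) hqm ha
    rw [hsp.eq_prod_roots, map_mul, map_multiset_prod]
    refine S.mul_mem (hCS _ (leadingCoeff_ne_zero.2 ha0)) (S.multiset_prod_mem _ ?_)
    intro x hx
    rw [Multiset.map_map, Multiset.mem_map] at hx
    obtain ⟨r, hr, rfl⟩ := hx
    have h1 : (q ^ m).IsRoot r := (isRoot_of_mem_roots hr).dvd ha
    have h2 : q.eval r = 0 := by
      have : q.eval r ^ m = 0 := by simpa [IsRoot] using h1
      by_contra h
      exact pow_ne_zero m h this
    rw [hq, eval_prod, Finset.prod_eq_zero_iff] at h2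
    obtain ⟨i, -, hi⟩ := h2
    have : r = α i := by simpa [sub_eq_zero] using hi
    rw [this]
    exact hXS i
  obtain ⟨k, a, hk⟩ := IsLocalization.Away.surj q (u : R)
  obtain ⟨l, b, hl⟩ := IsLocalization.Away.surj q ((u⁻¹ : Rˣ) : R)
  have hab : a * b = q ^ (k + l) := by
    apply hinj
    rw [map_mul, ← hk, ← hl, map_pow, pow_add]
    calc _ = ((u : R) * ((u⁻¹ : Rˣ) : R)) * (algebraMap K[X] R q ^ k * algebraMap K[X] R q ^ l) := by ring
      _ = _ := by simp
  have h1 := key (k + l) a ⟨b, hab.symm⟩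
  have h2 := key k (q ^ k) dvd_rfl
  obtain ⟨w, hw⟩ := hqu
  have h3 : w ^ k ∈ H := hS _ (by simpa [hw] using h2)
  have h4 : u * w ^ k ∈ H := hS _ (by rw [Units.val_mul, Units.val_pow_eq_pow_val, hw, hk]; exact h1)
  exact (H.mul_mem_cancel_right h3).1 h4

open Polynomial in
theorem sum_units_aux {K : Type*} [Field K] {ι : Type*} [Fintype ι] [Nonempty ι] (α : ι → K)
    {R : Type*} [CommRing R] [Algebra K[X] R] [IsLocalization.Away (∏ i, (X - C (α i))) R]
    (r : R) : ∃ (k : ℕ) (e : Fin k → Rˣ), 1 ≤ k ∧ r = ∑ i, (e i : R) := by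
  set q : K[X] := ∏ i, (X - C (α i)) with hq
  have hqu : IsUnit (algebraMap K[X] R q) := IsLocalization.Away.algebraMap_isUnit q
  let S : Subsemiring R := (IsUnit.submonoid R).subsemiringClosure
  have hS : ∀ x : R, IsUnit x → x ∈ S := fun x hx => by
    change x ∈ (S : Set R)
    rw [Submonoid.subsemiringClosure_coe]
    exact AddSubmonoid.subset_closure hx
  have hCS : ∀ c : K, algebraMap K[X] R (C c) ∈ S := by
    intro c
    by_cases hc : c = 0
    · simp [hc]
    exact hS _ ((isUnit_C.2 (Ne.isUnit hc)).map _)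
  have hXS : algebraMap K[X] R X ∈ S := by
    let i : ι := Classical.arbitrary ι
    have : IsUnit (algebraMap K[X] R (X - C (α i))) := by
      refine isUnit_of_dvd_unit (map_dvd _ ?_) hqu
      exact Finset.dvd_prod_of_mem _ (Finset.mem_univ i)
    have h := S.add_mem (hS _ this) (hCS (α i))
    rwa [← map_add, sub_add_cancel] at h
  have hP : ∀ a : K[X], algebraMap K[X] R a ∈ S := by
    intro a
    induction a using Polynomial.induction_on' with
    | add p q hp hq => rw [map_add]; exact S.add_mem hp hq
    | monomial n c =>
      rw [← C_mul_X_pow_eq_monomial, map_mul, map_pow]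
      exact S.mul_mem (hCS c) (S.pow_mem hXS n)
  have hr : r ∈ S := by
    obtain ⟨k, a, hk⟩ := IsLocalization.Away.surj q r
    obtain ⟨w, hw⟩ := hqu
    have : r = algebraMap K[X] R a * ((w ^ k)⁻¹ : Rˣ) := by
      rw [← hk, ← hw, ← Units.val_pow_eq_pow_val, Units.mul_inv_cancel_right]
    rw [this]
    exact S.mul_mem (hP a) (hS _ (Units.isUnit _))
  have hex : ∃ l : List Rˣ, r = (l.map (fun u : Rˣ => (u : R))).sum := by
    change r ∈ (S : Set R) at hr
    rw [Submonoid.subsemiringClosure_coe] at hr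
    induction hr using AddSubmonoid.closure_induction with
    | mem x hx => obtain ⟨u, rfl⟩ := hx; exact ⟨[u], by simp⟩
    | zero => exact ⟨[], by simp⟩
    | add x y _ _ hx hy =>
      obtain ⟨l, rfl⟩ := hx
      obtain ⟨m, rfl⟩ := hy
      exact ⟨l ++ m, by simp⟩
  obtain ⟨l, hl⟩ := hex
  have hex' : ∃ l : List Rˣ, 1 ≤ l.length ∧ r = (l.map (fun u : Rˣ => (u : R))).sum := by
    cases l with
    | nil => exact ⟨[1, -1], by simp, by simpa using hl⟩
    | cons u l => exact ⟨u :: l, by simp, hl⟩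
  obtain ⟨l, h1, h2⟩ := hex'
  refine ⟨l.length, l.get, h1, ?_⟩
  rw [h2, ← List.sum_ofFn]
  congr 1
  conv_lhs => rw [← List.ofFn_get l, List.map_ofFn]
  rfl

section CharZeroPart
open PowerSeries

theorem X_pow_dvd_iterate_derivative {K : Type*} [Field K] (j : ℕ) : ∀ (M : ℕ) (w : K⟦X⟧),
    X ^ (M + j) ∣ w → X ^ M ∣ (d⁄dX K)^[j] w := by
  induction j with
  | zero => intro M w h; simpa using h
  | succ j ih =>
    intro M w h
    rw [Function.iterate_succ_apply]
    apply ih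
    rw [X_pow_dvd_iff] at h ⊢
    intro m hm
    rw [coeff_derivative, h (m + 1) (by omega), zero_mul]

theorem eq_zero_of_iterate_derivative {K : Type*} [Field K] [CharZero K] (j : ℕ) : ∀ (w : K⟦X⟧),
    X ^ j ∣ w → (d⁄dX K)^[j] w = 0 → w = 0 := by
  induction j with
  | zero => intro w _ h; simpa using h
  | succ j ih =>
    intro w h h0
    rw [Function.iterate_succ_apply] at h0
    have h1 : d⁄dX K w = 0 := by
      apply ih _ _ h0
      have := X_pow_dvd_iterate_derivative 1 j w h
      simpa using this
    apply derivative.ext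
    · rw [h1, map_zero]
    · rw [map_zero]
      exact X_dvd_iff.1 ((dvd_pow_self X (Nat.succ_ne_zero j)).trans h)

/-- Units of the power series ring with polynomial logarithmic derivative (up to `Q`). -/
def GoodUnits {K : Type*} [Field K] (Q : Polynomial K) : Subgroup K⟦X⟧ˣ where
  carrier := {u | ∃ P : Polynomial K, P.natDegree ≤ Q.natDegree ∧
    (Q : K⟦X⟧) * d⁄dX K (u : K⟦X⟧) = (P : K⟦X⟧) * u}
  one_mem' := ⟨0, by simp, by simp⟩
  mul_mem' := by
    rintro a b ⟨P, hP, h⟩ ⟨P', hP', h'⟩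
    refine ⟨P + P', (Polynomial.natDegree_add_le _ _).trans (max_le hP hP'), ?_⟩
    rw [Units.val_mul, Derivation.leibniz, Polynomial.coe_add]
    simp only [smul_eq_mul]
    linear_combination (b : K⟦X⟧) * h + (a : K⟦X⟧) * h'
  inv_mem' := by
    rintro a ⟨P, hP, h⟩
    refine ⟨-P, by simpa using hP, ?_⟩
    rw [derivative_inv, Polynomial.coe_neg]
    have : (a : K⟦X⟧) * ((a⁻¹ : K⟦X⟧ˣ) : K⟦X⟧) = 1 := Units.mul_inv a
    linear_combination (-((a⁻¹ : K⟦X⟧ˣ) : K⟦X⟧) ^ 2) * h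
      - (P : K⟦X⟧) * ((a⁻¹ : K⟦X⟧ˣ) : K⟦X⟧) * this

theorem good_iterate {K : Type*} [Field K] (Q : Polynomial K) (v : K⟦X⟧ˣ) (hv : v ∈ GoodUnits Q)
    (d : ℕ) (P : Polynomial K) (hP : P.natDegree ≤ d) (j : ℕ) :
    ∃ p : Polynomial K, p.natDegree ≤ d + j * Q.natDegree ∧
      (Q : K⟦X⟧) ^ j * (d⁄dX K)^[j] ((P : K⟦X⟧) * v) = (p : K⟦X⟧) * v := by
  obtain ⟨L, hL, h⟩ := hv
  induction j with
  | zero => exact ⟨P, by simpa using hP, by simp⟩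
  | succ j ih =>
    obtain ⟨p, hp, hpj⟩ := ih
    refine ⟨Q * Polynomial.derivative p + p * L
      - Polynomial.C (j : K) * (Polynomial.derivative Q * p), ?_, ?_⟩
    · have e1 : (Q * Polynomial.derivative p).natDegree ≤ d + (j + 1) * Q.natDegree := by
        refine Polynomial.natDegree_mul_le.trans ?_
        have := Polynomial.natDegree_derivative_le p
        rw [add_mul]; omega
      have e2 : (p * L).natDegree ≤ d + (j + 1) * Q.natDegree := by
        refine Polynomial.natDegree_mul_le.trans ?_
        rw [add_mul]; omega
      have e3 : (Polynomial.C (j : K) * (Polynomial.derivative Q * p)).natDegree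
          ≤ d + (j + 1) * Q.natDegree := by
        refine (Polynomial.natDegree_C_mul_le _ _).trans (Polynomial.natDegree_mul_le.trans ?_)
        have := Polynomial.natDegree_derivative_le Q
        rw [add_mul]; omega
      exact (Polynomial.natDegree_sub_le _ _).trans
        (max_le ((Polynomial.natDegree_add_le _ _).trans (max_le e1 e2)) e3)
    · rw [Function.iterate_succ_apply']
      generalize (d⁄dX K)^[j] ((P : K⟦X⟧) * v) = y at hpj ⊢
      have hd := congrArg (d⁄dX K) hpj
      rw [Derivation.leibniz, Derivation.leibniz, Derivation.leibniz_pow, derivative_coe,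
        derivative_coe] at hd
      simp only [smul_eq_mul, nsmul_eq_mul] at hd
      simp only [Polynomial.coe_add, Polynomial.coe_sub, Polynomial.coe_mul, Polynomial.coe_C]
      rw [map_natCast (PowerSeries.C : K →+* K⟦X⟧) j]
      have hj : (j : K⟦X⟧) * (Q : K⟦X⟧) ^ (j - 1) * Q = j * (Q : K⟦X⟧) ^ j := by
        cases j with
        | zero => simp
        | succ j => simp [pow_succ]; ring
      linear_combination (Q : K⟦X⟧) * hd + (p : K⟦X⟧) * h
        - (j : K⟦X⟧) * (Polynomial.derivative Q : K⟦X⟧) * hpj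
        - y * (Polynomial.derivative Q : K⟦X⟧) * hj

theorem main_claim {K : Type*} [Field K] [CharZero K] (Q : Polynomial K) (hQ : Q ≠ 0) (N : ℕ) :
    ∀ d : ℕ, ∃ M : ℕ, ∀ (P : Fin N → Polynomial K) (u : Fin N → K⟦X⟧ˣ),
      (∀ i, (P i).natDegree ≤ d) → (∀ i, u i ∈ GoodUnits Q) →
      X ^ M ∣ ∑ i, (P i : K⟦X⟧) * (u i : K⟦X⟧) → ∑ i, (P i : K⟦X⟧) * (u i : K⟦X⟧) = 0 := by
  induction N with
  | zero => intro d; exact ⟨0, by simp⟩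
  | succ N ih =>
    intro d
    obtain ⟨M, hM⟩ := ih (d + (d + 1) * Q.natDegree)
    refine ⟨M + (d + 1), ?_⟩
    intro P u hP hu hdvd
    have hQ' : (Q : K⟦X⟧) ≠ 0 := by simpa using hQ
    let v : Fin N → K⟦X⟧ˣ := fun i => u i.castSucc * (u (Fin.last N))⁻¹
    have hv : ∀ i, v i ∈ GoodUnits Q := fun i =>
      (GoodUnits Q).mul_mem (hu _) ((GoodUnits Q).inv_mem (hu _))
    have hS : (∑ i, (P i : K⟦X⟧) * (u i : K⟦X⟧)) * (((u (Fin.last N))⁻¹ : K⟦X⟧ˣ) : K⟦X⟧) =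
        ∑ i, (P i.castSucc : K⟦X⟧) * (v i : K⟦X⟧) + (P (Fin.last N) : K⟦X⟧) := by
      rw [Fin.sum_univ_castSucc, add_mul, Finset.sum_mul, Units.mul_inv_cancel_right]
      simp [v, mul_assoc]
    set S := ∑ i, (P i : K⟦X⟧) * (u i : K⟦X⟧) with hSdef
    set w := S * (((u (Fin.last N))⁻¹ : K⟦X⟧ˣ) : K⟦X⟧) with hw
    suffices hw0 : w = 0 by
      rw [hw] at hw0
      exact (Units.mul_left_eq_zero _).1 hw0
    have hwd : X ^ (M + (d + 1)) ∣ w := hdvd.mul_right _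
    apply eq_zero_of_iterate_derivative (d + 1) w ((pow_dvd_pow X (by omega)).trans hwd)
    choose p hp hpe using fun i => good_iterate Q (v i) (hv i) d (P i.castSucc) (hP _) (d + 1)
    have hlast : (d⁄dX K)^[d + 1] (P (Fin.last N) : K⟦X⟧) = 0 := by
      have : ∀ (j : ℕ) (f : Polynomial K), (d⁄dX K)^[j] (f : K⟦X⟧) =
          ((Polynomial.derivative^[j] f : Polynomial K) : K⟦X⟧) := by
        intro j
        induction j with
        | zero => intro f; rfl
        | succ j ih => intro f; rw [Function.iterate_succ_apply, derivative_coe, ih,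
            Function.iterate_succ_apply]
      rw [this, Polynomial.iterate_derivative_eq_zero (Nat.lt_succ_of_le (hP _)),
        Polynomial.coe_zero]
    have hD : (Q : K⟦X⟧) ^ (d + 1) * (d⁄dX K)^[d + 1] w = ∑ i, (p i : K⟦X⟧) * (v i : K⟦X⟧) := by
      rw [hS, iterate_map_add, hlast, add_zero]
      have : (d⁄dX K)^[d + 1] (∑ i, (P i.castSucc : K⟦X⟧) * (v i : K⟦X⟧)) =
          ∑ i, (d⁄dX K)^[d + 1] ((P i.castSucc : K⟦X⟧) * (v i : K⟦X⟧)) := by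
        have h1 : ∀ y, (d⁄dX K)^[d + 1] y = (((d⁄dX K : K⟦X⟧ →ₗ[K] K⟦X⟧)) ^ (d + 1)) y := by
          intro y; rw [Module.End.pow_apply]; rfl
        simp only [h1, map_sum]
      rw [this, Finset.mul_sum]
      exact Finset.sum_congr rfl fun i _ => hpe i
    have h0 := hM p v hp hv (by
      rw [← hD]
      exact (X_pow_dvd_iterate_derivative (d + 1) M w hwd).mul_left _)
    rw [← hD] at h0
    exact (mul_eq_zero.1 h0).resolve_left (pow_ne_zero _ hQ')

theorem char_zero_aux {K : Type*} [Field K] [CharZero K] {ι : Type*} [Fintype ι] (α : ι → K)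
    {R : Type*} [CommRing R] [Algebra (Polynomial K) R]
    [IsLocalization.Away (∏ i, (Polynomial.X - Polynomial.C (α i))) R] (N : ℕ) :
    ∃ r : R, ¬ ∃ (k : ℕ) (e : Fin k → Rˣ), 1 ≤ k ∧ k ≤ N ∧ r = ∑ i, (e i : R) := by
  classical
  obtain ⟨β, hβ⟩ : ∃ β : K, ∀ i, β ≠ α i := by
    obtain ⟨β, hβ⟩ := Infinite.exists_notMem_finset (Finset.univ.image α)
    exact ⟨β, fun i h => hβ (Finset.mem_image.2 ⟨i, Finset.mem_univ i, h.symm⟩)⟩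
  set q : Polynomial K := ∏ i, (Polynomial.X - Polynomial.C (α i)) with hq
  let g : Polynomial K →+* K⟦X⟧ :=
    (Polynomial.coeToPowerSeries.ringHom).comp
      (Polynomial.compRingHom (Polynomial.X + Polynomial.C β))
  have hg : ∀ a, g a = ((a.comp (Polynomial.X + Polynomial.C β) : Polynomial K) : K⟦X⟧) :=
    fun a => rfl
  have hgi : ∀ i, g (Polynomial.X - Polynomial.C (α i)) =
      ((Polynomial.X + Polynomial.C (β - α i) : Polynomial K) : K⟦X⟧) := by
    intro i; rw [hg]; congr 1; simp; ring
  have hgu : IsUnit (g q) := by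
    rw [hq, map_prod]
    refine IsUnit.prod_iff.2 fun i _ => ?_
    rw [hgi, PowerSeries.isUnit_iff_constantCoeff]
    simpa using sub_ne_zero.2 (hβ i)
  let φ : R →+* K⟦X⟧ := IsLocalization.Away.lift q hgu
  have hφ : ∀ a, φ (algebraMap _ R a) = g a := fun a => IsLocalization.Away.lift_eq q hgu a
  let Q : Polynomial K := ∏ i, (Polynomial.X + Polynomial.C (β - α i))
  have hQ : Q ≠ 0 := Finset.prod_ne_zero_iff.2 fun i _ => Polynomial.X_add_C_ne_zero _
  have hgood : ∀ u : Rˣ, Units.map (φ : R →* K⟦X⟧) u ∈ GoodUnits Q := by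
    intro u
    change u ∈ (GoodUnits Q).comap (Units.map (φ : R →* K⟦X⟧))
    refine units_mem_aux α _ ?_ ?_ u
    · intro c u hu
      refine ⟨0, by simp, ?_⟩
      have : ((Units.map (φ : R →* K⟦X⟧) u : K⟦X⟧ˣ) : K⟦X⟧) = PowerSeries.C c := by
        change φ u = _
        rw [hu, hφ, hg]; simp
      rw [this]; simp
    · intro i u hu
      have : ((Units.map (φ : R →* K⟦X⟧) u : K⟦X⟧ˣ) : K⟦X⟧) =
          ((Polynomial.X + Polynomial.C (β - α i) : Polynomial K) : K⟦X⟧) := by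
        change φ u = _
        rw [hu, hφ, hgi]
      obtain ⟨P, hP⟩ : (Polynomial.X + Polynomial.C (β - α i)) ∣ Q :=
        Finset.dvd_prod_of_mem _ (Finset.mem_univ i)
      refine ⟨P, Polynomial.natDegree_le_of_dvd ⟨_, hP.trans (mul_comm _ _)⟩ hQ, ?_⟩
      rw [this, derivative_coe, hP]
      simp
      ring
  choose m hm using fun k => main_claim Q hQ k 0
  let M := ∑ k ∈ Finset.range (N + 1), m k
  refine ⟨algebraMap _ R ((Polynomial.X - Polynomial.C β) ^ M), ?_⟩
  rintro ⟨k, e, -, hk, he⟩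
  have hk' : m k ≤ M := Finset.single_le_sum (f := m) (fun _ _ => Nat.zero_le _)
    (Finset.mem_range.2 (Nat.lt_succ_of_le hk))
  have h1 : (X : K⟦X⟧) ^ M = ∑ i, φ (e i) := by
    rw [← map_sum, ← he, hφ, hg]; simp
  have h2 := hm k (fun _ => 1) (fun i => Units.map (φ : R →* K⟦X⟧) (e i)) (by simp)
    (fun i => hgood _)
  simp only [Polynomial.coe_one, one_mul, Units.coe_map, MonoidHom.coe_coe] at h2
  rw [← h1] at h2
  exact pow_ne_zero M X_ne_zero (h2 (pow_dvd_pow X hk'))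

end CharZeroPart

section CharPPart
open Polynomial

theorem frob_indep {K : Type*} [Field K] (p : ℕ) [Fact p.Prime] [CharP K p] (M : ℕ) (k : ℕ)
    (hM : M ≤ p ^ k) (y : Fin M → K[X]) (h : ∑ j, y j ^ p ^ k * X ^ (j : ℕ) = 0) (j : Fin M) :
    y j = 0 := by
  have hpos : 0 < p ^ k := pow_pos (Fact.out : p.Prime).pos k
  have hc : ∀ (f : K[X]) (i : ℕ) (l j : Fin M), (f ^ p ^ k * X ^ (l : ℕ)).coeff (i * p ^ k + j)
      = if l = j then f.coeff i ^ p ^ k else 0 := by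
    intro f i l j
    have hl := l.2
    have hj := j.2
    rw [← Polynomial.map_iterateFrobenius_expand]
    rw [coeff_mul_X_pow', coeff_map, coeff_expand hpos]
    by_cases hlj : l = j
    · subst hlj
      simp [hpos, iterateFrobenius_def]
    · rw [if_neg hlj]
      split_ifs with h1 h2
      · exfalso
        obtain ⟨c, hc⟩ := h2
        apply hlj
        apply Fin.ext
        have e : i * p ^ k + j = p ^ k * c + l := by omega
        have := congrArg (· % p ^ k) e
        simpa [Nat.mod_eq_of_lt (hl.trans_le hM), Nat.mod_eq_of_lt (hj.trans_le hM),
          Nat.add_mod] using this.symm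
      · simp
      · rfl
  ext i
  have h1 := congrArg (fun f => coeff f (i * p ^ k + j)) h
  simp only [finsetSum_coeff, hc, Finset.sum_ite_eq', Finset.mem_univ, if_true, coeff_zero] at h1
  by_contra h2
  exact pow_ne_zero _ h2 h1

theorem char_p_aux {K : Type*} [Field K] [PerfectField K] (p : ℕ) [Fact p.Prime] [CharP K p]
    {ι : Type*} [Fintype ι] (α : ι → K)
    {R : Type*} [CommRing R] [Algebra K[X] R]
    [IsLocalization.Away (∏ i, (X - C (α i))) R] (N : ℕ) :
    ∃ r : R, ¬ ∃ (k : ℕ) (e : Fin k → Rˣ), 1 ≤ k ∧ k ≤ N ∧ r = ∑ i, (e i : R) := by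
  classical
  set q : K[X] := ∏ i, (X - C (α i)) with hq
  let E := FractionRing K[X]
  have : CharP E p := charP_of_injective_algebraMap (IsFractionRing.injective K[X] E) p
  have : ExpChar K p := ExpChar.prime Fact.out
  have : ExpChar E p := ExpChar.prime Fact.out
  have : PerfectRing K p := inferInstance
  let M := p ^ N
  have hpos : 0 < M := pow_pos (Fact.out : p.Prime).pos N
  have hNM : N + 1 ≤ M := Nat.lt_pow_self (Fact.out : p.Prime).one_lt
  let F : Subfield E := (iterateFrobenius E p N).fieldRange
  have hF : ∀ y : E, y ^ M ∈ F := fun y => ⟨y, rfl⟩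
  let g : K[X] →+* E := algebraMap K[X] E
  have hginj : Function.Injective g := IsFractionRing.injective K[X] E
  have hq0 : q ≠ 0 := Finset.prod_ne_zero_iff.2 fun i _ => X_sub_C_ne_zero _
  have hgu : IsUnit (g q) := ((map_ne_zero_iff g hginj).2 hq0).isUnit
  let φ : R →+* E := IsLocalization.Away.lift q hgu
  have hφ : ∀ a, φ (algebraMap _ R a) = g a := fun a => IsLocalization.Away.lift_eq q hgu a
  let x : ι → E := fun i => g (X - C (α i))
  have hx : ∀ i, x i ≠ 0 := fun i => (map_ne_zero_iff g hginj).2 (X_sub_C_ne_zero _)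
  let b : (ι → Fin M) → E := fun z => ∏ i, x i ^ (z i : ℕ)
  -- normal form of units modulo `M`-th powers
  let T : Subgroup Eˣ :=
    { carrier := {u | ∃ (y : E) (z : ι → ℤ), (u : E) = y ^ M * ∏ i, x i ^ z i}
      one_mem' := ⟨1, 0, by simp⟩
      mul_mem' := by
        rintro u v ⟨y, z, h⟩ ⟨y', z', h'⟩
        refine ⟨y * y', z + z', ?_⟩
        have : ∏ i, x i ^ (z + z') i = (∏ i, x i ^ z i) * ∏ i, x i ^ z' i := by
          rw [← Finset.prod_mul_distrib]
          exact Finset.prod_congr rfl fun i _ => zpow_add₀ (hx i) _ _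
        rw [Units.val_mul, h, h', this]; ring
      inv_mem' := by
        rintro u ⟨y, z, h⟩
        refine ⟨y⁻¹, -z, ?_⟩
        rw [Units.val_inv_eq_inv_val, h]
        simp [mul_comm] }
  have hT : ∀ u : Rˣ, Units.map (φ : R →* E) u ∈ T := by
    intro u
    change u ∈ T.comap (Units.map (φ : R →* E))
    refine units_mem_aux α _ ?_ ?_ u
    · intro c u hu
      obtain ⟨c', hc'⟩ := (bijective_iterateFrobenius K p N).2 c
      refine ⟨g (C c'), 0, ?_⟩
      change φ u = _
      rw [hu, hφ, ← hc', iterateFrobenius_def]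
      simp [M]
    · intro i u hu
      refine ⟨1, Pi.single i 1, ?_⟩
      change φ u = _
      rw [hu, hφ, Finset.prod_eq_single i]
      · simp [x]
      · intro j _ hj; simp [Pi.single_eq_of_ne hj]
      · simp
  have hnf : ∀ u : Rˣ, ∃ (z : ι → Fin M) (y : F), φ u = y • b z := by
    intro u
    obtain ⟨y, z, h⟩ := hT u
    have hM0 : (M : ℤ) ≠ 0 := by exact_mod_cast hpos.ne'
    have hz : ∀ i, ((z i % M).toNat : ℤ) = z i % M := fun i =>
      Int.toNat_of_nonneg (Int.emod_nonneg _ hM0)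
    refine ⟨fun i => ⟨(z i % M).toNat, ?_⟩, ⟨_, hF (y * ∏ i, x i ^ (z i / M))⟩, ?_⟩
    · have := Int.emod_lt_of_pos (z i) (show (0 : ℤ) < M by exact_mod_cast hpos)
      have := hz i
      omega
    · change φ u = _ at h
      rw [h, Subfield.smul_def, smul_eq_mul]
      change _ = (y * ∏ i, x i ^ (z i / M)) ^ M * ∏ i, x i ^ (z i % M).toNat
      rw [mul_pow, mul_assoc]
      congr 1
      rw [← Finset.prod_pow, ← Finset.prod_mul_distrib]
      refine Finset.prod_congr rfl fun i _ => ?_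
      rw [← zpow_natCast, ← zpow_natCast, hz, ← zpow_mul, ← zpow_add₀ (hx i)]
      congr 1
      rw [mul_comm]
      exact (Int.mul_ediv_add_emod _ _).symm
  have : Infinite E := Infinite.of_injective g hginj
  have : Infinite F := Infinite.of_injective (fun y : E => (⟨_, hF y⟩ : F)) (by
    intro y y' h
    exact (iterateFrobenius E p N).injective (congrArg Subtype.val h))
  let W : {t : Finset (ι → Fin M) // t.card ≤ N} → Submodule F E :=
    fun t => Submodule.span F ((t.1.image b : Finset E) : Set E)
  -- the powers of `X` are independent over `F`
  have hind : LinearIndependent F (fun j : Fin (N + 1) => g X ^ (j : ℕ)) := by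
    rw [Fintype.linearIndependent_iff]
    intro c hc
    choose y hy using fun j => (c j).2
    obtain ⟨d, hd⟩ := IsLocalization.exist_integer_multiples_of_finite (nonZeroDivisors K[X]) y
    choose a ha using hd
    have hd0 : g d ≠ 0 := (map_ne_zero_iff g hginj).2 (nonZeroDivisors.ne_zero d.2)
    have ha' : ∀ j, g (a j) = g d * y j := fun j => by
      rw [show g (a j) = _ from ha j, Algebra.smul_def]
    have hsum : ∑ j, a j ^ p ^ N * X ^ (j : ℕ) = 0 := by
      apply hginj
      rw [map_zero, map_sum]
      have : ∀ j : Fin (N + 1), g (a j ^ p ^ N * X ^ (j : ℕ)) = g d ^ M * (c j • g X ^ (j : ℕ)) := by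
        intro j
        rw [map_mul, map_pow, map_pow, ha', mul_pow, Subfield.smul_def, ← hy j, smul_eq_mul,
          iterateFrobenius_def, mul_assoc]
      rw [Finset.sum_congr rfl fun j _ => this j, ← Finset.mul_sum, hc, mul_zero]
    intro j
    have h0 := frob_indep p (N + 1) N hNM a hsum j
    have h1 := ha' j
    rw [h0, map_zero] at h1
    have h2 : y j = 0 := (mul_eq_zero.1 h1.symm).resolve_left hd0
    apply Subtype.ext
    rw [← hy j, h2, map_zero]; rfl
  have hWtop : ∀ t, W t ≠ ⊤ := by
    intro t ht
    have hfin : Module.Finite F E := ⟨⟨t.1.image b, ht⟩⟩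
    have h1 := hind.fintype_card_le_finrank
    have h2 : Module.finrank F (W t) ≤ N :=
      (finrank_span_finset_le_card (R := F) (t.1.image b)).trans (Finset.card_image_le.trans t.2)
    rw [ht, finrank_top] at h2
    simp at h1
    omega
  obtain ⟨w, hw⟩ : ∃ w : E, ∀ t, w ∉ W t := by
    by_contra! hcon
    obtain ⟨t, ht⟩ := Subspace.exists_eq_top_of_iUnion_eq_univ (p := W)
      (Set.eq_univ_of_forall fun w => Set.mem_iUnion.2 (hcon w))
    exact hWtop t ht
  obtain ⟨a, d, hd, rfl⟩ := IsFractionRing.div_surjective (A := K[X]) w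
  have hd0 : g d ≠ 0 := (map_ne_zero_iff g hginj).2 (nonZeroDivisors.ne_zero hd)
  refine ⟨algebraMap _ R (a * d ^ (M - 1)), ?_⟩
  rintro ⟨k, e, -, hk, he⟩
  choose z y hzy using hnf
  let t : {t : Finset (ι → Fin M) // t.card ≤ N} :=
    ⟨Finset.univ.image fun i => z (e i), Finset.card_image_le.trans (by simpa using hk)⟩
  apply hw t
  have h1 : φ (algebraMap _ R (a * d ^ (M - 1))) ∈ W t := by
    rw [he, map_sum]
    refine Submodule.sum_mem _ fun i _ => ?_
    rw [hzy]
    refine Submodule.smul_mem _ _ (Submodule.subset_span ?_)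
    exact Finset.mem_coe.2 (Finset.mem_image_of_mem _
      (Finset.mem_image_of_mem _ (Finset.mem_univ i)))
  have h2 := (W t).smul_mem (⟨_, hF (g d)⁻¹⟩ : F) h1
  convert h2 using 1
  rw [hφ, Subfield.smul_def, smul_eq_mul]
  change g a / g d = (g d)⁻¹ ^ M * g (a * d ^ (M - 1))
  obtain ⟨M', hM'⟩ : ∃ M', M = M' + 1 := ⟨M - 1, by omega⟩
  rw [hM', map_mul, map_pow]
  simp only [Nat.add_sub_cancel]
  have h3 : (g d)⁻¹ ^ M' * g d ^ M' = 1 := by rw [← mul_pow, inv_mul_cancel₀ hd0, one_pow]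
  rw [div_eq_mul_inv, pow_succ]
  linear_combination (-(g a * (g d)⁻¹)) * h3

end CharPPart

/-- For a perfect field `K`, `n ≥ 2` and pairwise distinct `α_2, …, α_n ∈ K`
(indexed here by `Fin (n-1)`), the localization `K[X][1/q]` with
`q = (X - α_2)⋯(X - α_n)` has unit sum number `ω`. -/
theorem unit_sum_number_localized_polynomial_ring
    (K : Type*) [Field K] [PerfectField K]
    (n : ℕ) (hn : 2 ≤ n) (α : Fin (n - 1) → K) (hα : Function.Injective α) :
    UnitSumNumberOmega
      (Localization.Away (∏ i, (Polynomial.X - Polynomial.C (α i)))) := by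
  have : Nonempty (Fin (n - 1)) := ⟨⟨0, by omega⟩⟩
  refine ⟨fun r => sum_units_aux α r, fun N _ => ?_⟩
  obtain ⟨p, hp⟩ := CharP.exists K
  rcases CharP.char_is_prime_or_zero K p with h | h
  · have : Fact p.Prime := ⟨h⟩
    exact char_p_aux p α N
  · subst h
    have : CharZero K := CharP.charP_to_charZero K
    exact char_zero_aux α N
end

section
/- Let K be a finite field of odd characteristic and f ∈ K[X] a nonconstant squarefree (separable) polynomial. Let R := K[x][y] = K[X,Y]/(Y² − f(X)), regarded as a module over K[x]. Then R is generated by its units as a K[x]-module if and only if there exists μ ∈ K, μ ≠ 0, such that f + μ is a square in K[X]. -/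
open Polynomial in
lemma aux_unique {K : Type*} [Field K] (f a b : K[X])
    (h : AdjoinRoot.of ((X : K[X][X]) ^ 2 - C f) a
      + AdjoinRoot.of ((X : K[X][X]) ^ 2 - C f) b * AdjoinRoot.root _ = 0) : a = 0 ∧ b = 0 := by
  have h1 : AdjoinRoot.mk ((X : K[X][X]) ^ 2 - C f) (C b * X + C a) = 0 := by
    rw [map_add, map_mul, AdjoinRoot.mk_C, AdjoinRoot.mk_C, AdjoinRoot.mk_X, add_comm]; exact h
  rw [AdjoinRoot.mk_eq_zero] at h1
  have hm : ((X : K[X][X]) ^ 2 - C f).Monic := monic_X_pow_sub_C f (by norm_num)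
  have h2 : (C b * X + C a : K[X][X]) = 0 := by
    apply eq_zero_of_dvd_of_degree_lt h1
    rw [degree_X_pow_sub_C (by norm_num) f]
    exact lt_of_le_of_lt degree_linear_le (by norm_num)
  constructor
  · simpa using congrArg (fun p => coeff p 0) h2
  · simpa using congrArg (fun p => coeff p 1) h2

open Polynomial in
lemma aux_exists {K : Type*} [Field K] (f : K[X])
    (u : AdjoinRoot ((X : K[X][X]) ^ 2 - C f)) : ∃ a b : K[X],
    u = AdjoinRoot.of _ a + AdjoinRoot.of _ b * AdjoinRoot.root _ := by
  obtain ⟨p, rfl⟩ := AdjoinRoot.mk_surjective u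
  have hm : ((X : K[X][X]) ^ 2 - C f).Monic := monic_X_pow_sub_C f (by norm_num)
  have hd : (p %ₘ ((X : K[X][X]) ^ 2 - C f)).natDegree ≤ 1 := by
    have h := degree_modByMonic_lt p hm
    rw [degree_X_pow_sub_C (by norm_num) f] at h
    refine natDegree_le_of_degree_le (Order.le_of_lt_succ ?_)
    exact h
  obtain ⟨b, a, hab⟩ := exists_eq_X_add_C_of_natDegree_le_one hd
  refine ⟨a, b, ?_⟩
  have h2 : AdjoinRoot.mk ((X : K[X][X]) ^ 2 - C f) p
      = AdjoinRoot.mk _ (p %ₘ ((X : K[X][X]) ^ 2 - C f)) := by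
    conv_lhs => rw [← modByMonic_add_div p ((X : K[X][X]) ^ 2 - C f)]
    simp [AdjoinRoot.mk_self]
  rw [h2, hab, map_add, map_mul, AdjoinRoot.mk_C, AdjoinRoot.mk_C, AdjoinRoot.mk_X, add_comm]

open Polynomial in
lemma aux_sq {K : Type*} [Field K] (f : K[X]) :
    AdjoinRoot.root ((X : K[X][X]) ^ 2 - C f) ^ 2 = AdjoinRoot.of _ f := by
  have h := AdjoinRoot.mk_self (f := (X : K[X][X]) ^ 2 - C f)
  rw [map_sub, map_pow, AdjoinRoot.mk_X, AdjoinRoot.mk_C] at h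
  exact sub_eq_zero.mp h

open Polynomial in
lemma aux_unit {K : Type*} [Field K] (f a b : K[X])
    (h : IsUnit (AdjoinRoot.of ((X : K[X][X]) ^ 2 - C f) a
      + AdjoinRoot.of ((X : K[X][X]) ^ 2 - C f) b * AdjoinRoot.root _)) :
    ∃ c : K, c ≠ 0 ∧ a ^ 2 - f * b ^ 2 = C c := by
  obtain ⟨v, hv⟩ := h.exists_right_inv
  obtain ⟨a', b', rfl⟩ := aux_exists f v
  have hs := aux_sq f
  obtain ⟨h1, h2⟩ := aux_unique f (a * a' + f * (b * b') - 1) (a * b' + a' * b) (by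
    simp only [map_add, map_sub, map_mul, map_one]
    linear_combination hv - (AdjoinRoot.of _ b) * (AdjoinRoot.of _ b') * hs)
  have h3 : (a ^ 2 - f * b ^ 2) * (a' ^ 2 - f * b' ^ 2) = 1 := by
    linear_combination (a * a' + f * (b * b') + 1) * h1 - f * (a * b' + a' * b) * h2
  obtain ⟨c, hc, hc'⟩ := Polynomial.isUnit_iff.mp (IsUnit.of_mul_eq_one _ h3)
  exact ⟨c, hc.ne_zero, hc'.symm⟩

open Polynomial in
lemma aux_descent {K : Type*} [Field K] (h2 : (2 : K) ≠ 0) (f p q : K[X]) (hf : 0 < f.natDegree)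
    (c' : K) (hc' : c' ≠ 0) (hq : q ≠ 0) (hpq : p ^ 2 - f * q ^ 2 = C c')
    (hmin : ∀ a b : K[X], ∀ c : K, c ≠ 0 → a ^ 2 - f * b ^ 2 = C c → b ≠ 0 →
      q.natDegree ≤ b.natDegree) :
    ∀ n : ℕ, ∀ a b : K[X], ∀ c : K, b.natDegree = n → c ≠ 0 → a ^ 2 - f * b ^ 2 = C c → q ∣ b := by
  have hf0 : f ≠ 0 := by rintro rfl; simp at hf
  have hcop : IsCoprime q p := by
    refine ⟨-(C c'⁻¹ * f * q), C c'⁻¹ * p, ?_⟩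
    have : (C c'⁻¹ * C c' : K[X]) = 1 := by rw [← C_mul, inv_mul_cancel₀ hc', C_1]
    linear_combination C c'⁻¹ * hpq + this
  have hpdeg : 0 < p.natDegree ∧ p ≠ 0 := by
    have e : p ^ 2 = f * q ^ 2 + C c' := by linear_combination hpq
    have : (p ^ 2).natDegree = f.natDegree + 2 * q.natDegree := by
      rw [e, natDegree_add_C, natDegree_mul hf0 (pow_ne_zero 2 hq), natDegree_pow]
    rw [natDegree_pow] at this
    have h0 : 0 < p.natDegree := by omega
    exact ⟨h0, by rintro rfl; simp at h0⟩
  intro n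
  induction n using Nat.strong_induction_on with
  | _ n ih =>
  intro a b c hn hc hab
  by_cases hb : b = 0
  · simp [hb]
  have hle := hmin a b c hc hab hb
  -- key step, for either sign of `a`
  have key : ∀ a : K[X], a ^ 2 - f * b ^ 2 = C c →
      b.natDegree + p.natDegree ≤ (b * p + a * q).natDegree → q ∣ b := by
    intro a hab hdeg
    have hprod : (b * p - a * q) * (b * p + a * q) = C c' * b ^ 2 - C c * q ^ 2 := by
      linear_combination b ^ 2 * hpq - q ^ 2 * hab
    have hdvd : q ∣ b * p - a * q := by
      by_cases hz : b * p - a * q = 0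
      · simp [hz]
      have hz' : b * p + a * q ≠ 0 := by
        intro h; rw [h] at hdeg; simp at hdeg; omega
      have hd : (C c' * b ^ 2 - C c * q ^ 2).natDegree ≤ 2 * b.natDegree := by
        refine (natDegree_sub_le _ _).trans (max_le ?_ ?_)
        · exact (natDegree_C_mul_le _ _).trans natDegree_pow_le
        · exact ((natDegree_C_mul_le _ _).trans natDegree_pow_le).trans (by omega)
      rw [← hprod, natDegree_mul hz hz'] at hd
      refine ih _ ?_ (a * p - f * (b * q)) (b * p - a * q) (c * c') rfl (mul_ne_zero hc hc') ?_
      · omega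
      · rw [C_mul]
        linear_combination (p ^ 2 - f * q ^ 2) * hab + C c * hpq
    have : q ∣ b * p := by
      have := dvd_add hdvd (Dvd.intro_left a rfl : q ∣ a * q)
      simpa using this
    exact hcop.dvd_of_dvd_mul_right this
  by_cases h : b.natDegree + p.natDegree ≤ (b * p + a * q).natDegree
  · exact key a hab h
  · apply key (-a) (by linear_combination hab)
    by_contra h'
    have e : (b * p + a * q) + (b * p + -a * q) = C 2 * (b * p) := by
      rw [show (C 2 : K[X]) = 2 from rfl]; ring
    have := natDegree_add_le (b * p + a * q) (b * p + -a * q)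
    rw [e, natDegree_C_mul h2, natDegree_mul hb hpdeg.2] at this
    rcases le_max_iff.mp this with h | h <;> omega

open Polynomial in
lemma aux_q {K : Type*} [Field K] (h2 : (2 : K) ≠ 0) (f : K[X]) (hf : 0 < f.natDegree) :
    ∃ p q : K[X], ∃ c' : K, c' ≠ 0 ∧ p ^ 2 - f * q ^ 2 = C c' ∧
    ∀ a b : K[X], ∀ c : K, c ≠ 0 → a ^ 2 - f * b ^ 2 = C c → q ∣ b := by
  by_cases H : ∃ n : ℕ, ∃ a b : K[X], ∃ c : K, c ≠ 0 ∧ a ^ 2 - f * b ^ 2 = C c ∧ b ≠ 0 ∧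
      b.natDegree = n
  · classical
    obtain ⟨p, q, c', hc', hpq, hq, hd⟩ := Nat.find_spec H
    refine ⟨p, q, c', hc', hpq, fun a b c hc hab => ?_⟩
    refine aux_descent h2 f p q hf c' hc' hq hpq ?_ _ a b c rfl hc hab
    intro a b c hc hab hb
    rw [hd]
    exact Nat.find_min' H ⟨a, b, c, hc, hab, hb, rfl⟩
  · refine ⟨1, 0, 1, one_ne_zero, by simp, fun a b c hc hab => ?_⟩
    by_contra hb
    exact H ⟨_, a, b, c, hc, hab, by simpa using hb, rfl⟩

/-- For a finite field `K` of odd characteristic and a nonconstant squarefree `f ∈ K[X]`,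
the ring `R = K[X,Y]/(Y² - f(X))` is generated by its units as a `K[x]`-module if and
only if `f + μ` is a square in `K[X]` for some nonzero constant `μ`. -/
theorem generated_by_units_iff_f_plus_const_square
    (K : Type*) [Field K] [Finite K] (hodd : Odd (ringChar K))
    (f : Polynomial K) (hf : 0 < f.natDegree) (hsf : Squarefree f) :
    Submodule.span (Polynomial K)
        {u : AdjoinRoot ((Polynomial.X : Polynomial (Polynomial K)) ^ 2 - Polynomial.C f) |
          IsUnit u} = ⊤ ↔
      ∃ μ : K, μ ≠ 0 ∧ ∃ g : Polynomial K, f + Polynomial.C μ = g ^ 2 := by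
  have h2 : (2 : K) ≠ 0 := Ring.two_ne_zero (by rintro h; rw [h] at hodd; revert hodd; decide)
  have hs := aux_sq f
  constructor
  · intro hspan
    obtain ⟨p, q, c, hc, hpq, hq⟩ := aux_q h2 f hf
    let S : Submodule (Polynomial K)
        (AdjoinRoot ((Polynomial.X : Polynomial (Polynomial K)) ^ 2 - Polynomial.C f)) :=
      { carrier := {u | ∃ a b : Polynomial K,
          u = AdjoinRoot.of _ a + AdjoinRoot.of _ (q * b) * AdjoinRoot.root _}
        zero_mem' := ⟨0, 0, by simp⟩
        add_mem' := by
          rintro _ _ ⟨a, b, rfl⟩ ⟨a', b', rfl⟩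
          exact ⟨a + a', b + b', by simp only [map_add, map_mul]; ring⟩
        smul_mem' := by
          rintro r _ ⟨a, b, rfl⟩
          refine ⟨r * a, r * b, ?_⟩
          rw [Algebra.smul_def, AdjoinRoot.algebraMap_eq]
          simp only [map_mul]; ring }
    have hS : Submodule.span (Polynomial K)
        {u : AdjoinRoot ((Polynomial.X : Polynomial (Polynomial K)) ^ 2 - Polynomial.C f) |
          IsUnit u} ≤ S := by
      rw [Submodule.span_le]
      intro u hu
      obtain ⟨a, b, rfl⟩ := aux_exists f u
      obtain ⟨c, hc, hab⟩ := aux_unit f a b hu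
      obtain ⟨d, rfl⟩ := hq a b c hc hab
      exact ⟨a, d, rfl⟩
    rw [hspan] at hS
    obtain ⟨a, b, hab⟩ := hS (Submodule.mem_top (x := AdjoinRoot.root _))
    obtain ⟨-, h⟩ := aux_unique f a (q * b - 1) (by
      simp only [map_sub, map_mul, map_one] at hab ⊢
      linear_combination -hab)
    obtain ⟨k, hk, rfl⟩ := Polynomial.isUnit_iff.mp
      (IsUnit.of_mul_eq_one b (sub_eq_zero.mp h))
    have hk0 := hk.ne_zero
    refine ⟨c * k⁻¹ ^ 2, by positivity, Polynomial.C k⁻¹ * p, ?_⟩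
    have hkk : (Polynomial.C k * Polynomial.C k⁻¹ : Polynomial K) = 1 := by
      rw [← Polynomial.C_mul, mul_inv_cancel₀ hk0, Polynomial.C_1]
    rw [Polynomial.C_mul, Polynomial.C_pow]
    linear_combination -(Polynomial.C k⁻¹) ^ 2 * hpq
      - f * (Polynomial.C k * Polynomial.C k⁻¹ + 1) * hkk
  · rintro ⟨μ, hμ, g, hg⟩
    rw [eq_top_iff]
    rintro u -
    obtain ⟨a, b, rfl⟩ := aux_exists f u
    have hy : IsUnit (AdjoinRoot.of ((Polynomial.X : Polynomial (Polynomial K)) ^ 2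
        - Polynomial.C f) g + AdjoinRoot.root _) := by
      have hg' := congrArg (AdjoinRoot.of ((Polynomial.X : Polynomial (Polynomial K)) ^ 2
        - Polynomial.C f)) hg
      have hm := congrArg (AdjoinRoot.of ((Polynomial.X : Polynomial (Polynomial K)) ^ 2
        - Polynomial.C f)) (show Polynomial.C μ * Polynomial.C μ⁻¹ = 1 by
          rw [← Polynomial.C_mul, mul_inv_cancel₀ hμ, Polynomial.C_1])
      simp only [map_add, map_pow, map_mul, map_one] at hg' hm
      refine IsUnit.of_mul_eq_one ((AdjoinRoot.of _ g - AdjoinRoot.root _)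
        * AdjoinRoot.of _ (Polynomial.C μ⁻¹)) ?_
      linear_combination hm - AdjoinRoot.of _ (Polynomial.C μ⁻¹) * hg'
        - AdjoinRoot.of _ (Polynomial.C μ⁻¹) * hs
    have e : AdjoinRoot.of ((Polynomial.X : Polynomial (Polynomial K)) ^ 2
        - Polynomial.C f) a + AdjoinRoot.of _ b * AdjoinRoot.root _
        = (a - b * g) • (1 : AdjoinRoot ((Polynomial.X : Polynomial (Polynomial K)) ^ 2
        - Polynomial.C f)) + b • (AdjoinRoot.of _ g + AdjoinRoot.root _) := by
      rw [Algebra.smul_def, Algebra.smul_def, AdjoinRoot.algebraMap_eq]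
      simp only [map_sub, map_mul]; ring
    rw [e]
    exact add_mem (Submodule.smul_mem _ _ (Submodule.subset_span isUnit_one))
      (Submodule.smul_mem _ _ (Submodule.subset_span hy))
end

section
/- Let K be a finite field of odd characteristic and f ∈ K[X] a nonconstant squarefree (separable) polynomial. Let R := K[x][y] = K[X,Y]/(Y² − f(X)), regarded as a module over K[x], and suppose R is generated by its units as a K[x]-module. Then there exists a polynomial a ∈ K[X] such that a(x) + y is a unit of R and every unit of R has the form λ·(a(x) + y)^n for some nonzero λ ∈ K and some integer n (where negative powers are taken in the unit group of R). -/
open Polynomial in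
/-- The element `p(x) + q(x) y`. -/
noncomputable def quadElt {K : Type*} [Field K] (f p q : K[X]) :
    AdjoinRoot ((X : K[X][X]) ^ 2 - C f) :=
  AdjoinRoot.of _ p + AdjoinRoot.of _ q * AdjoinRoot.root _

section Aux
open Polynomial
variable {K : Type*} [Field K] (f : K[X])

theorem quad_root_sq : (AdjoinRoot.root ((X : K[X][X]) ^ 2 - C f)) ^ 2 = AdjoinRoot.of _ f := by
  have h := AdjoinRoot.eval₂_root ((X : K[X][X]) ^ 2 - C f)
  simp only [eval₂_sub, eval₂_pow, eval₂_X, eval₂_C] at h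
  exact sub_eq_zero.mp h

theorem quad_monic : ((X : K[X][X]) ^ 2 - C f).Monic := monic_X_pow_sub_C f two_ne_zero

theorem quad_natDegree : ((X : K[X][X]) ^ 2 - C f).natDegree = 2 := natDegree_X_pow_sub_C

theorem quad_mul (p q r s : K[X]) :
    quadElt f p q * quadElt f r s = quadElt f (p * r + f * q * s) (p * s + q * r) := by
  simp only [quadElt, map_add, map_mul]
  linear_combination (AdjoinRoot.of _ q * AdjoinRoot.of _ s) * quad_root_sq f

theorem quad_exists (z : AdjoinRoot ((X : K[X][X]) ^ 2 - C f)) : ∃ p q, z = quadElt f p q := by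
  induction z using AdjoinRoot.induction_on with
  | ih g =>
    have h1 : AdjoinRoot.mk ((X : K[X][X]) ^ 2 - C f) g
        = AdjoinRoot.mk _ (g %ₘ ((X : K[X][X]) ^ 2 - C f)) := by
      conv_lhs => rw [← modByMonic_add_div g ((X : K[X][X]) ^ 2 - C f)]
      simp
    have h2 : (g %ₘ ((X : K[X][X]) ^ 2 - C f)).natDegree ≤ 1 := by
      have := natDegree_modByMonic_lt g (quad_monic f)
        (by intro h; have := quad_natDegree f; rw [h] at this; simp at this)
      rw [quad_natDegree] at this
      omega
    obtain ⟨q, p, h3⟩ := exists_eq_X_add_C_of_natDegree_le_one h2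
    refine ⟨p, q, ?_⟩
    rw [h1, h3]
    simp [quadElt, add_comm]

theorem quad_inj {p q r s : K[X]} (h : quadElt f p q = quadElt f r s) : p = r ∧ q = s := by
  have h1 : AdjoinRoot.mk ((X : K[X][X]) ^ 2 - C f) (C (p - r) + C (q - s) * X) = 0 := by
    simp only [quadElt] at h
    simp only [map_add, map_mul, AdjoinRoot.mk_C, AdjoinRoot.mk_X, map_sub]
    linear_combination h
  rw [AdjoinRoot.mk_eq_zero] at h1
  have h2 : C (p - r) + C (q - s) * X = 0 := by
    refine eq_zero_of_dvd_of_natDegree_lt h1 ?_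
    rw [quad_natDegree, add_comm]
    exact lt_of_le_of_lt natDegree_linear_le (by norm_num)
  have e0 := congrArg (fun t => coeff t 0) h2
  have e1 := congrArg (fun t => coeff t 1) h2
  simp [coeff_C] at e0 e1
  exact ⟨sub_eq_zero.mp e0, sub_eq_zero.mp e1⟩

theorem quad_unit_norm {p q : K[X]} (h : IsUnit (quadElt f p q)) :
    ∃ c : K, c ≠ 0 ∧ p ^ 2 - f * q ^ 2 = C c := by
  obtain ⟨v, hv⟩ := h.exists_right_inv
  obtain ⟨r, s, rfl⟩ := quad_exists f v
  rw [quad_mul] at hv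
  have h1 : quadElt f 1 0 = 1 := by simp [quadElt]
  obtain ⟨e1, e2⟩ := quad_inj f (hv.trans h1.symm)
  have : IsUnit (p ^ 2 - f * q ^ 2) := by
    refine IsUnit.of_mul_eq_one (r ^ 2 - f * s ^ 2) ?_
    linear_combination (p * r + f * q * s + 1) * e1 - f * (p * s + q * r) * e2
  obtain ⟨c, hc, h⟩ := Polynomial.isUnit_iff.mp this
  exact ⟨c, hc.ne_zero, h.symm⟩

theorem quad_const (c : K) : quadElt f (C c) 0 = AdjoinRoot.of _ (C c) := by simp [quadElt]

theorem quad_unit_of_norm {p q : K[X]} {c : K} (hc : c ≠ 0) (h : p ^ 2 - f * q ^ 2 = C c) :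
    quadElt f p q * quadElt f (C c⁻¹ * p) (- C c⁻¹ * q) = 1 := by
  have h1 : quadElt f 1 0 = 1 := by simp [quadElt]
  have h2 : (C c * C c⁻¹ : K[X]) = 1 := by rw [← C_mul, mul_inv_cancel₀ hc, C_1]
  rw [quad_mul, ← h1]
  congr 1
  · linear_combination (C c⁻¹) * h + h2
  · ring

/-- natural degree of the rational part is positive when the `y` part is nonzero. -/
theorem quad_deg_pos (hf : 0 < f.natDegree) {p q : K[X]} {c : K} (hq : q ≠ 0)
    (h : p ^ 2 - f * q ^ 2 = C c) : 0 < p.natDegree := by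
  by_contra h0
  have h0 : p.natDegree = 0 := by omega
  obtain ⟨a, rfl⟩ := natDegree_eq_zero.mp h0
  have h1 : f * q ^ 2 = C (a ^ 2 - c) := by simp only [C_sub, C_pow]; linear_combination -h
  have h2 := congrArg natDegree h1
  have hf0 : f ≠ 0 := by rintro rfl; simp at hf
  rw [natDegree_mul hf0 (pow_ne_zero _ hq), natDegree_C] at h2
  omega

theorem quad_descent (h2 : (2 : K) ≠ 0) {p q a b : K[X]} {c d : K}
    (hp : p ^ 2 - f * q ^ 2 = C c) (ha : a ^ 2 - f * b ^ 2 = C d)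
    (hpos : 0 < a.natDegree) (hle : a.natDegree ≤ p.natDegree) :
    (p * a + f * q * b).natDegree < p.natDegree ∨ (p * a - f * q * b).natDegree < p.natDegree := by
  by_contra! hcon
  obtain ⟨k1, k2⟩ := hcon
  have n1 : p * a + f * q * b ≠ 0 := by intro h; rw [h] at k1; simp at k1; omega
  have n2 : p * a - f * q * b ≠ 0 := by intro h; rw [h] at k2; simp at k2; omega
  have hprod : (p * a + f * q * b) * (p * a - f * q * b)
      = C d * p ^ 2 + C c * a ^ 2 - C (c * d) := by
    rw [C_mul]
    linear_combination (a ^ 2 - C d) * hp + (f * q ^ 2) * ha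
  have hd := natDegree_mul n1 n2
  rw [hprod] at hd
  have hle2 : (C d * p ^ 2 + C c * a ^ 2 - C (c * d)).natDegree ≤ 2 * p.natDegree := by
    refine natDegree_sub_le_of_le (natDegree_add_le_of_degree_le ?_ ?_) ?_ |>.trans (max_self _).le
    · exact (natDegree_C_mul_le _ _).trans (natDegree_pow_le)
    · exact (natDegree_C_mul_le _ _).trans (natDegree_pow_le.trans (by omega))
    · rw [natDegree_C]; exact Nat.zero_le _
  have hsum : (p * a + f * q * b) + (p * a - f * q * b) = C 2 * (p * a) := by
    rw [show (C 2 : K[X]) = 2 from rfl]; ring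
  have hp0 : p ≠ 0 := by rintro rfl; simp at hle; omega
  have ha0 : a ≠ 0 := by rintro rfl; simp at hpos
  have hs : (C 2 * (p * a)).natDegree = p.natDegree + a.natDegree := by
    rw [natDegree_C_mul h2, natDegree_mul hp0 ha0]
  have := natDegree_add_le (p * a + f * q * b) (p * a - f * q * b)
  rw [hsum, hs] at this
  rcases le_max_iff.mp this with h | h <;> omega

theorem quad_generate (h2 : (2 : K) ≠ 0) (hf : 0 < f.natDegree) {a b : K[X]}
    (ε : (AdjoinRoot ((X : K[X][X]) ^ 2 - C f))ˣ) (hε : (ε : AdjoinRoot _) = quadElt f a b)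
    (hb : b ≠ 0)
    (hmin : ∀ p q, IsUnit (quadElt f p q) → q ≠ 0 → a.natDegree ≤ p.natDegree) :
    ∀ (n : ℕ) (p q : K[X]) (u : (AdjoinRoot ((X : K[X][X]) ^ 2 - C f))ˣ),
      (u : AdjoinRoot _) = quadElt f p q → p.natDegree = n →
      ∃ (l : K) (m : ℤ), l ≠ 0 ∧ (u : AdjoinRoot ((X : K[X][X]) ^ 2 - C f)) =
        AdjoinRoot.of _ (C l) * ((ε ^ m : (AdjoinRoot ((X : K[X][X]) ^ 2 - C f))ˣ) :
          AdjoinRoot ((X : K[X][X]) ^ 2 - C f)) := by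
  obtain ⟨d, hd0, hd⟩ := quad_unit_norm f (hε ▸ ε.isUnit)
  have hpos := quad_deg_pos f hf hb hd
  have hinv : ((ε⁻¹ : (AdjoinRoot ((X : K[X][X]) ^ 2 - C f))ˣ) : AdjoinRoot _)
      = quadElt f (C d⁻¹ * a) (-C d⁻¹ * b) := by
    exact Units.inv_eq_of_mul_eq_one_right (by rw [hε]; exact quad_unit_of_norm f hd0 hd)
  intro n
  induction n using Nat.strong_induction_on with
  | _ n ih =>
  intro p q u hu hn
  obtain ⟨c, hc0, hc⟩ := quad_unit_norm f (hu ▸ u.isUnit)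
  by_cases hq : q = 0
  · subst hq
    have : IsUnit p := by
      have : IsUnit (p ^ 2) := by
        rw [show p ^ 2 = C c by linear_combination hc]
        exact isUnit_C.mpr hc0.isUnit
      exact (isUnit_pow_iff two_ne_zero).mp this
    obtain ⟨l, hl, rfl⟩ := Polynomial.isUnit_iff.mp this
    exact ⟨l, 0, hl.ne_zero, by rw [hu, quad_const]; simp⟩
  · have hle := hmin p q (hu ▸ u.isUnit) hq
    rcases quad_descent f h2 hc hd hpos hle with h | h
    · have e : ((u * ε : (AdjoinRoot ((X : K[X][X]) ^ 2 - C f))ˣ) : AdjoinRoot _)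
          = quadElt f (p * a + f * q * b) (p * b + q * a) := by
        rw [Units.val_mul, hu, hε, quad_mul]
      obtain ⟨l, m, hl, hm⟩ := ih _ (hn ▸ h) _ _ _ e rfl
      refine ⟨l, m - 1, hl, ?_⟩
      rw [zpow_sub_one, Units.val_mul, ← mul_assoc, ← hm, Units.val_mul, Units.mul_inv_cancel_right]
    · have e : ((u * ε⁻¹ : (AdjoinRoot ((X : K[X][X]) ^ 2 - C f))ˣ) : AdjoinRoot _)
          = quadElt f (C d⁻¹ * (p * a - f * q * b)) (C d⁻¹ * (q * a - p * b)) := by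
        rw [Units.val_mul, hu, hinv, quad_mul]
        congr 1 <;> ring
      have hdeg : (C d⁻¹ * (p * a - f * q * b)).natDegree < n := by
        rw [natDegree_C_mul (inv_ne_zero hd0)]; exact hn ▸ h
      obtain ⟨l, m, hl, hm⟩ := ih _ hdeg _ _ _ e rfl
      refine ⟨l, m + 1, hl, ?_⟩
      rw [zpow_add_one, Units.val_mul, ← mul_assoc, ← hm, Units.val_mul, Units.inv_mul_cancel_right]

theorem quad_dvd_pow (b r s : K[X]) (n : ℕ) :
    ∃ r' s', (quadElt f r (b * s)) ^ n = quadElt f r' (b * s') := by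
  induction n with
  | zero => exact ⟨1, 0, by simp [quadElt]⟩
  | succ n ih =>
    obtain ⟨r', s', h⟩ := ih
    refine ⟨r' * r + f * (b * s') * (b * s), r' * s + s' * r, ?_⟩
    rw [pow_succ (quadElt f r (b * s)) n, h, quad_mul]
    congr 1; ring

theorem quad_span (hgen : Submodule.span K[X]
      {u : AdjoinRoot ((X : K[X][X]) ^ 2 - C f) | IsUnit u} = ⊤) (b : K[X])
    (hb : ∀ u : AdjoinRoot ((X : K[X][X]) ^ 2 - C f), IsUnit u → ∃ r s, u = quadElt f r (b * s)) :
    IsUnit b := by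
  have key : ∀ z ∈ Submodule.span K[X]
      {u : AdjoinRoot ((X : K[X][X]) ^ 2 - C f) | IsUnit u}, ∃ r s, z = quadElt f r (b * s) := by
    intro z hz
    induction hz using Submodule.span_induction with
    | mem x hx => exact hb x hx
    | zero => exact ⟨0, 0, by simp [quadElt]⟩
    | add x y _ _ hx hy =>
      obtain ⟨r, s, rfl⟩ := hx
      obtain ⟨r', s', rfl⟩ := hy
      exact ⟨r + r', s + s', by simp only [quadElt, map_add, map_mul]; ring⟩
    | smul t x _ hx =>
      obtain ⟨r, s, rfl⟩ := hx
      refine ⟨t * r, t * s, ?_⟩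
      rw [Algebra.smul_def, AdjoinRoot.algebraMap_eq]
      simp only [quadElt, map_mul]; ring
  obtain ⟨r, s, h⟩ := key (quadElt f 0 1) (by rw [hgen]; trivial)
  exact IsUnit.of_mul_eq_one s (quad_inj f h).2.symm

end Aux



/-- If the ring `R = K[X,Y]/(Y² - f(X))` (with `K` a finite field of odd characteristic and
`f` nonconstant squarefree) is generated by its units as a `K[x]`-module, then it has a
fundamental unit of the form `a(x) + y`: every unit of `R` is `λ·(a(x) + y)^n` with
`λ ∈ K*` and `n ∈ ℤ`. -/
theorem fundamental_unit_odd_char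
    (K : Type*) [Field K] [Finite K] (hodd : Odd (ringChar K))
    (f : Polynomial K) (hf : 0 < f.natDegree) (hsf : Squarefree f)
    (hgen : Submodule.span (Polynomial K)
      {u : AdjoinRoot ((Polynomial.X : Polynomial (Polynomial K)) ^ 2 - Polynomial.C f) |
        IsUnit u} = ⊤) :
    ∃ (a : Polynomial K)
      (ε : (AdjoinRoot ((Polynomial.X : Polynomial (Polynomial K)) ^ 2 - Polynomial.C f))ˣ),
      (ε : AdjoinRoot ((Polynomial.X : Polynomial (Polynomial K)) ^ 2 - Polynomial.C f)) =
          AdjoinRoot.of _ a + AdjoinRoot.root _ ∧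
      ∀ u : (AdjoinRoot ((Polynomial.X : Polynomial (Polynomial K)) ^ 2 - Polynomial.C f))ˣ,
        ∃ (l : K) (n : ℤ), l ≠ 0 ∧
          (u : AdjoinRoot ((Polynomial.X : Polynomial (Polynomial K)) ^ 2 - Polynomial.C f)) =
            AdjoinRoot.of _ (Polynomial.C l) * ((ε ^ n :
              (AdjoinRoot ((Polynomial.X : Polynomial (Polynomial K)) ^ 2 -
                Polynomial.C f))ˣ) :
              AdjoinRoot ((Polynomial.X : Polynomial (Polynomial K)) ^ 2 - Polynomial.C f)) := by
  classical
  have h2 : (2 : K) ≠ 0 := by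
    refine Ring.two_ne_zero ?_
    intro h
    rw [h] at hodd
    exact absurd hodd (by decide)
  -- a unit with nonzero `y` part
  have hex : ∃ n : ℕ, ∃ p q, IsUnit (quadElt f p q) ∧ q ≠ 0 ∧ p.natDegree = n := by
    by_contra! hcon
    refine not_isUnit_zero (quad_span f hgen 0 ?_)
    intro u hu
    obtain ⟨p, q, rfl⟩ := quad_exists f u
    have : q = 0 := by
      by_contra hq
      exact hcon _ p q hu hq rfl
    exact ⟨p, 0, by rw [this, mul_zero]⟩
  obtain ⟨a, b, hu, hb, hdeg⟩ := Nat.find_spec hex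
  have hmin : ∀ p q, IsUnit (quadElt f p q) → q ≠ 0 → a.natDegree ≤ p.natDegree := by
    intro p q h hq
    rw [hdeg]
    exact Nat.find_min' hex ⟨p, q, h, hq, rfl⟩
  obtain ⟨ε, hε⟩ := hu
  obtain ⟨d, hd0, hd⟩ := quad_unit_norm f (hε ▸ ε.isUnit)
  have hbu : IsUnit b := by
    refine quad_span f hgen b ?_
    rintro _ ⟨u, rfl⟩
    obtain ⟨p, q, hpq⟩ := quad_exists f (u : AdjoinRoot _)
    obtain ⟨l, m, -, hm⟩ := quad_generate f h2 hf ε hε hb hmin _ p q u hpq rfl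
    have hpow : ∃ r s, ((ε ^ m : (AdjoinRoot ((Polynomial.X : Polynomial (Polynomial K)) ^ 2 -
        Polynomial.C f))ˣ) : AdjoinRoot _) = quadElt f r (b * s) := by
      obtain ⟨k, rfl | rfl⟩ := m.eq_nat_or_neg
      · rw [zpow_natCast, Units.val_pow_eq_pow_val, hε]
        simpa using quad_dvd_pow f b a 1 k
      · have hinv : ((ε⁻¹ : (AdjoinRoot ((Polynomial.X : Polynomial (Polynomial K)) ^ 2 -
            Polynomial.C f))ˣ) : AdjoinRoot _)
            = quadElt f (Polynomial.C d⁻¹ * a) (b * -Polynomial.C d⁻¹) := by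
          rw [mul_comm b]
          exact Units.inv_eq_of_mul_eq_one_right (by rw [hε]; exact quad_unit_of_norm f hd0 hd)
        rw [zpow_neg, ← inv_zpow, zpow_natCast, Units.val_pow_eq_pow_val, hinv]
        exact quad_dvd_pow f b _ _ k
    obtain ⟨r, s, hrs⟩ := hpow
    refine ⟨Polynomial.C l * r, Polynomial.C l * s, ?_⟩
    rw [hm, hrs]
    simp only [quadElt, map_mul]; ring
  obtain ⟨β, hβ, rfl⟩ := Polynomial.isUnit_iff.mp hbu
  have hβ0 := hβ.ne_zero
  have hCC : (Polynomial.C β⁻¹ * Polynomial.C β : Polynomial K) = 1 := by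
    rw [← Polynomial.C_mul, inv_mul_cancel₀ hβ0, Polynomial.C_1]
  have hu' : IsUnit (quadElt f (Polynomial.C β⁻¹ * a) 1) := by
    have e : quadElt f (Polynomial.C β⁻¹ * a) 1
        = AdjoinRoot.of _ (Polynomial.C β⁻¹) * quadElt f a (Polynomial.C β) := by
      rw [← hCC]
      simp only [quadElt, map_mul]; ring
    rw [e]
    refine IsUnit.mul ?_ (hε ▸ ε.isUnit)
    exact (Polynomial.isUnit_C.mpr (inv_ne_zero hβ0).isUnit).map _
  obtain ⟨η, hη⟩ := hu'
  refine ⟨Polynomial.C β⁻¹ * a, η, by rw [hη]; simp [quadElt], ?_⟩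
  intro u
  obtain ⟨p, q, hpq⟩ := quad_exists f (u : AdjoinRoot _)
  refine quad_generate f h2 hf η hη one_ne_zero ?_ _ p q u hpq rfl
  rw [Polynomial.natDegree_C_mul (inv_ne_zero hβ0)]
  exact hmin
end

section
/- Let K be a finite field of odd characteristic, f ∈ K[X] a nonconstant squarefree polynomial, and a ∈ K[X] a polynomial such that a² − f is a nonzero constant. Define sequences of polynomials a_n, b_n ∈ K[X] by a_0 = 1, b_0 = 0, a_{n+1} = a·a_n + f·b_n, and b_{n+1} = a·b_n + a_n. Then deg f is even, and for every positive integer n the polynomials a_n and b_n are nonzero with deg a_n = n·(deg f)/2 and deg b_n = (n − 1)·(deg f)/2. -/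
/-- Degrees of the coordinate polynomials of powers of a unit `a(x) + y` in
`K[X,Y]/(Y² - f(X))`: `deg f` is even, `deg a_n = n·(deg f)/2` and
`deg b_n = (n-1)·(deg f)/2`. -/
theorem degrees_of_unit_powers_odd_char
    (K : Type*) [Field K] [Finite K] (hodd : Odd (ringChar K))
    (f : Polynomial K) (hf : 0 < f.natDegree) (hsf : Squarefree f)
    (a : Polynomial K) (ha : ∃ μ : K, μ ≠ 0 ∧ a ^ 2 - f = Polynomial.C μ)
    (A B : ℕ → Polynomial K) (hA0 : A 0 = 1) (hB0 : B 0 = 0)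
    (hA : ∀ n, A (n + 1) = a * A n + f * B n)
    (hB : ∀ n, B (n + 1) = a * B n + A n) :
    Even f.natDegree ∧
      ∀ n : ℕ, 0 < n → A n ≠ 0 ∧ B n ≠ 0 ∧
        2 * (A n).natDegree = n * f.natDegree ∧
        2 * (B n).natDegree = (n - 1) * f.natDegree := by
  obtain ⟨μ, hμ, h⟩ := ha
  have hfa : f = a ^ 2 - Polynomial.C μ := by rw [← h]; ring
  have hdeg : f.natDegree = 2 * a.natDegree := by
    rw [hfa, Polynomial.natDegree_sub_C, Polynomial.natDegree_pow]
  have hd : 0 < a.natDegree := by omega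
  have h2 : (2 : K) ≠ 0 := by
    apply Ring.two_ne_zero
    intro h
    rw [h] at hodd
    exact absurd hodd (by decide)
  have hc : a.leadingCoeff ≠ 0 := by
    rw [Polynomial.leadingCoeff_ne_zero]
    rintro rfl
    simp at hd
  have hfc : f.coeff (2 * a.natDegree) = a.leadingCoeff ^ 2 := by
    have := Polynomial.coeff_pow_of_natDegree_le (p := a) (n := a.natDegree) (m := 2) le_rfl
    rw [hfa, Polynomial.coeff_sub, Polynomial.coeff_C, if_neg (by omega), sub_zero, this]
    rfl
  have key : ∀ n : ℕ, (A (n + 1)).natDegree ≤ (n + 1) * a.natDegree ∧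
      (B (n + 1)).natDegree ≤ n * a.natDegree ∧
      (A (n + 1)).coeff ((n + 1) * a.natDegree) = 2 ^ n * a.leadingCoeff ^ (n + 1) ∧
      (B (n + 1)).coeff (n * a.natDegree) = 2 ^ n * a.leadingCoeff ^ n := by
    intro n
    induction n with
    | zero => simp [hA, hB, hA0, hB0]
    | succ n ih =>
      obtain ⟨i1, i2, i3, i4⟩ := ih
      have e1 : (n + 1 + 1) * a.natDegree = a.natDegree + (n + 1) * a.natDegree := by ring
      have e2 : (n + 1 + 1) * a.natDegree = 2 * a.natDegree + n * a.natDegree := by ring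
      have e3 : (n + 1) * a.natDegree = a.natDegree + n * a.natDegree := by ring
      refine ⟨?_, ?_, ?_, ?_⟩
      · rw [hA]
        apply Polynomial.natDegree_add_le_of_degree_le
        · rw [e1]; exact Polynomial.natDegree_mul_le_of_le le_rfl i1
        · rw [e2]; exact Polynomial.natDegree_mul_le_of_le hdeg.le i2
      · rw [hB]
        apply Polynomial.natDegree_add_le_of_degree_le
        · rw [e3]; exact Polynomial.natDegree_mul_le_of_le le_rfl i2
        · exact i1
      · rw [hA, Polynomial.coeff_add]
        nth_rewrite 1 [e1]
        rw [e2, Polynomial.coeff_mul_add_eq_of_natDegree_le le_rfl i1,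
          Polynomial.coeff_mul_add_eq_of_natDegree_le hdeg.le i2, i3, i4, hfc,
          Polynomial.coeff_natDegree]
        ring
      · rw [hB, Polynomial.coeff_add, i3]
        rw [e3, Polynomial.coeff_mul_add_eq_of_natDegree_le le_rfl i2, i4,
          Polynomial.coeff_natDegree]
        ring
  refine ⟨⟨a.natDegree, by omega⟩, ?_⟩
  intro n hn
  obtain ⟨n, rfl⟩ : ∃ m, n = m + 1 := ⟨n - 1, by omega⟩
  obtain ⟨i1, i2, i3, i4⟩ := key n
  have nA : (A (n + 1)).coeff ((n + 1) * a.natDegree) ≠ 0 := by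
    rw [i3]; exact mul_ne_zero (pow_ne_zero _ h2) (pow_ne_zero _ hc)
  have nB : (B (n + 1)).coeff (n * a.natDegree) ≠ 0 := by
    rw [i4]; exact mul_ne_zero (pow_ne_zero _ h2) (pow_ne_zero _ hc)
  refine ⟨?_, ?_, ?_, ?_⟩
  · intro h0; simp [h0] at nA
  · intro h0; simp [h0] at nB
  · rw [Polynomial.natDegree_eq_of_le_of_coeff_ne_zero i1 nA, hdeg]; ring
  · rw [Polynomial.natDegree_eq_of_le_of_coeff_ne_zero i2 nB, hdeg, Nat.add_sub_cancel]; ring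
end

section
/- Let K be a finite field of characteristic 2, and let B, C ∈ K[X] be nonzero polynomials such that B is monic of degree at least 2, every irreducible factor of B divides C exactly once (i.e., every prime factor of B is a simple prime factor of C), and deg C < 2·deg B. Let R := K[x][y] = K[X,Y]/(Y² + B(X)Y + C(X)), regarded as a module over K[x]. Then R is generated by its units as a K[x]-module if and only if there exist μ ∈ K, μ ≠ 0, and a polynomial a ∈ K[X] such that a² + B·a + C = μ (i.e., the polynomial Y² + B(x)Y + C(x) + μ has a root in K[x]). -/
open Polynomial in
theorem gu_mul_deg {K : Type*} [Field K] (B f1 g1 f2 g2 : K[X])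
    (hg1 : g1 ≠ 0) (hg2 : g2 ≠ 0) (hb : 2 ≤ B.natDegree)
    (h1 : f1.natDegree = g1.natDegree + B.natDegree)
    (h2 : (f2 - B * g2).natDegree < g2.natDegree + B.natDegree) :
    (f1 * g2 + f2 * g1 - B * g1 * g2).natDegree
      = g1.natDegree + g2.natDegree + B.natDegree := by
  have hf1 : f1 ≠ 0 := by
    rintro rfl
    simp at h1
    omega
  have e : f1 * g2 + f2 * g1 - B * g1 * g2 = f1 * g2 + (f2 - B * g2) * g1 := by ring
  have ha : (f1 * g2).natDegree = f1.natDegree + g2.natDegree := natDegree_mul hf1 hg2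
  have hl : ((f2 - B * g2) * g1).natDegree ≤ _ := natDegree_mul_le
  rw [e, natDegree_add_eq_left_of_natDegree_lt (by omega), ha, h1]
  omega

open Polynomial in
theorem gu_big {K : Type*} [Field K] (B C f g : K[X]) (c : K)
    (hg : g ≠ 0) (hB : B ≠ 0) (hb : 2 ≤ B.natDegree)
    (hC : C.natDegree < 2 * B.natDegree)
    (h : f ^ 2 - B * f * g + C * g ^ 2 = Polynomial.C c) :
    (f.natDegree = g.natDegree + B.natDegree ∧
      (f - B * g).natDegree < g.natDegree + B.natDegree) ∨
    ((f - B * g).natDegree = g.natDegree + B.natDegree ∧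
      f.natDegree < g.natDegree + B.natDegree) := by
  set f' := f - B * g with hf'
  have hBg : (B * g).natDegree = B.natDegree + g.natDegree := natDegree_mul hB hg
  have e : f * f' = Polynomial.C c - C * g ^ 2 := by
    rw [← h, hf']; ring
  have hp : (f * f').natDegree < 2 * (B.natDegree + g.natDegree) := by
    rw [e]
    have h1 : (Polynomial.C c - C * g ^ 2).natDegree ≤ _ := natDegree_sub_le _ _
    have h2 : (C * g ^ 2).natDegree ≤ _ := natDegree_mul_le
    rw [natDegree_pow] at h2
    rw [natDegree_C] at h1
    have := max_le (Nat.zero_le (C.natDegree + 2 * g.natDegree)) h2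
    omega
  have s1 : (f - f').natDegree = B.natDegree + g.natDegree := by
    rw [← hBg, hf']; congr 1; ring
  by_cases hf0 : f = 0
  · right
    rw [hf0] at s1 ⊢
    rw [zero_sub, natDegree_neg] at s1
    rw [natDegree_zero]
    omega
  by_cases hf0' : f' = 0
  · left
    rw [hf0'] at s1 ⊢
    rw [sub_zero] at s1
    rw [natDegree_zero]
    omega
  rw [natDegree_mul hf0 hf0'] at hp
  rcases lt_trichotomy f.natDegree f'.natDegree with hlt | heq | hlt
  · rw [natDegree_sub_eq_right_of_natDegree_lt hlt] at s1
    omega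
  · have : (f - f').natDegree ≤ _ := natDegree_sub_le _ _
    rw [heq, max_self] at this
    omega
  · rw [natDegree_sub_eq_left_of_natDegree_lt hlt] at s1
    omega

open Polynomial in
theorem gu_dvd {K : Type*} [Field K] (B C : K[X])
    (hB : B ≠ 0) (hb : 2 ≤ B.natDegree) (hC : C.natDegree < 2 * B.natDegree)
    (f2 g2 : K[X]) (c2 : K) (hg2 : g2 ≠ 0) (hc2 : c2 ≠ 0)
    (h2 : f2 ^ 2 - B * f2 * g2 + C * g2 ^ 2 = Polynomial.C c2)
    (hbig1 : f2.natDegree = g2.natDegree + B.natDegree)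
    (hbig2 : (f2 - B * g2).natDegree < g2.natDegree + B.natDegree)
    (hmin : ∀ (f g : K[X]) (c : K), c ≠ 0 → g ≠ 0 →
      f ^ 2 - B * f * g + C * g ^ 2 = Polynomial.C c → g2.natDegree ≤ g.natDegree) :
    ∀ (n : ℕ) (f g : K[X]) (c : K), g.natDegree = n → c ≠ 0 →
      f ^ 2 - B * f * g + C * g ^ 2 = Polynomial.C c → g2 ∣ g := by
  intro n
  induction n using Nat.strong_induction_on with
  | _ n ih =>
  have key : ∀ (f g : K[X]) (c : K), g.natDegree = n → c ≠ 0 → g ≠ 0 →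
      f ^ 2 - B * f * g + C * g ^ 2 = Polynomial.C c →
      f.natDegree = g.natDegree + B.natDegree →
      (f - B * g).natDegree < g.natDegree + B.natDegree → g2 ∣ g := by
    intro f g c hn hc hg h hb1 hb2
    set f3 := f * (f2 - B * g2) + C * g * g2 with hf3
    set g3 := f2 * g - f * g2 with hg3
    have h3 : f3 ^ 2 - B * f3 * g3 + C * g3 ^ 2 = Polynomial.C (c * c2) := by
      rw [C_mul, ← h, ← h2, hf3, hg3]; ring
    have e1 : f3 * g2 + f2 * g3 - B * g3 * g2 = Polynomial.C c2 * g := by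
      rw [← h2, hf3, hg3]; ring
    have e2 : (f3 - B * g3) * g + f * (-g3) - B * (-g3) * g = Polynomial.C c * g2 := by
      rw [← h, hf3, hg3]; ring
    have fin : g2 ∣ g3 → g2 ∣ g := by
      intro hd
      have : g2 ∣ Polynomial.C c2 * g := by
        rw [← e1]
        exact dvd_sub (dvd_add (dvd_mul_left _ _) (hd.mul_left _)) (dvd_mul_left _ _)
      exact (IsUnit.dvd_mul_left (isUnit_C.mpr hc2.isUnit)).mp this
    by_cases hg30 : g3 = 0
    · exact fin (by rw [hg30]; exact dvd_zero _)
    rcases gu_big B C f3 g3 _ hg30 hB hb hC h3 with ⟨ha, -⟩ | ⟨ha, -⟩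
    · have := gu_mul_deg B f3 g3 f2 g2 hg30 hg2 hb ha hbig2
      rw [e1, natDegree_C_mul hc2] at this
      exact fin (ih g3.natDegree (by omega) f3 g3 _ rfl (mul_ne_zero hc hc2) h3)
    · have := gu_mul_deg B (f3 - B * g3) (-g3) f g (neg_ne_zero.mpr hg30) hg hb
        (by rw [natDegree_neg]; exact ha) hb2
      rw [e2, natDegree_C_mul hc, natDegree_neg] at this
      have := hmin f g c hc hg h
      omega
  intro f g c hn hc h
  by_cases hg : g = 0
  · rw [hg]; exact dvd_zero _
  rcases gu_big B C f g c hg hB hb hC h with ⟨ha, hb'⟩ | ⟨ha, hb'⟩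
  · exact key f g c hn hc hg h ha hb'
  · have := key (f - B * g) (-g) c (by rw [natDegree_neg]; exact hn) hc (neg_ne_zero.mpr hg)
      (by rw [← h]; ring) (by rw [natDegree_neg]; exact ha)
      (by rw [natDegree_neg]; convert hb' using 2; ring)
    exact (dvd_neg).mp this

open Polynomial in
theorem gu_forward {K : Type*} [Field K] (B C : K[X])
    (hB : B ≠ 0) (hb : 2 ≤ B.natDegree) (hC : C.natDegree < 2 * B.natDegree)
    (S : Set (K[X] × K[X]))
    (hS : ∀ p ∈ S, ∃ c : K, c ≠ 0 ∧
      p.1 ^ 2 - B * p.1 * p.2 + C * p.2 ^ 2 = Polynomial.C c)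
    (hspan : ∀ d : K[X], (∀ p ∈ S, d ∣ p.2) → IsUnit d) :
    ∃ (μ : K) (a : K[X]), μ ≠ 0 ∧ a ^ 2 + B * a + C = Polynomial.C μ := by
  have hex : ∃ n : ℕ, ∃ (f g : K[X]) (c : K), c ≠ 0 ∧ g ≠ 0 ∧
      f ^ 2 - B * f * g + C * g ^ 2 = Polynomial.C c ∧ g.natDegree = n := by
    by_contra hno
    refine not_isUnit_zero (hspan 0 fun p hp => ?_)
    obtain ⟨c, hc, h⟩ := hS p hp
    by_contra hne
    exact hno ⟨_, p.1, p.2, c, hc, fun h0 => hne (by rw [h0]), h, rfl⟩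
  classical
  obtain ⟨f, g, c, hc, hg, h, hn⟩ := Nat.find_spec hex
  have hmin : ∀ (f' g' : K[X]) (c : K), c ≠ 0 → g' ≠ 0 →
      f' ^ 2 - B * f' * g' + C * g' ^ 2 = Polynomial.C c → g.natDegree ≤ g'.natDegree := by
    intro f' g' c' hc' hg' h'
    rw [hn]
    exact Nat.find_min' hex ⟨f', g', c', hc', hg', h', rfl⟩
  have hu : IsUnit g := by
    apply hspan
    intro p hp
    obtain ⟨c', hc', h'⟩ := hS p hp
    rcases gu_big B C f g c hg hB hb hC h with ⟨ha, hb'⟩ | ⟨ha, hb'⟩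
    · exact gu_dvd B C hB hb hC f g c hg hc h ha hb' hmin _ p.1 p.2 c' rfl hc' h'
    · have := gu_dvd B C hB hb hC (f - B * g) (-g) c (neg_ne_zero.mpr hg) hc
        (by rw [← h]; ring) (by rw [natDegree_neg]; exact ha)
        (by rw [natDegree_neg]; convert hb' using 2; ring)
        (by rw [natDegree_neg]; exact hmin) _ p.1 p.2 c' rfl hc' h'
      exact neg_dvd.mp this
  obtain ⟨k, hk, rfl⟩ := Polynomial.isUnit_iff.mp hu
  have hk0 : k ≠ 0 := hk.ne_zero
  refine ⟨c * k⁻¹ ^ 2, -f * Polynomial.C k⁻¹, by positivity, ?_⟩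
  have hkk : Polynomial.C k * Polynomial.C k⁻¹ = 1 := by
    rw [← C_mul, mul_inv_cancel₀ hk0, C_1]
  rw [C_mul, C_pow, ← h]
  linear_combination (B * f * Polynomial.C k⁻¹
    - C * (Polynomial.C k * Polynomial.C k⁻¹ + 1)) * hkk

/-- For a finite field `K` of characteristic `2` and `B, C ∈ K[X]` as in the (modified)
Hasse normal form, the ring `R = K[X,Y]/(Y² + B(X)Y + C(X))` is generated by its units as a
`K[x]`-module if and only if `Y² + B(x)Y + C(x) + μ` has a root in `K[x]` for some nonzero
constant `μ`. -/
theorem generated_by_units_iff_char_two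
    (K : Type*) [Field K] [Finite K] (hchar : ringChar K = 2)
    (B C : Polynomial K) (hB0 : B ≠ 0) (hC0 : C ≠ 0)
    (hBmonic : B.Monic) (hBdeg : 2 ≤ B.natDegree)
    (hfac : ∀ q : Polynomial K, Irreducible q → q ∣ B → q ∣ C ∧ ¬ q ^ 2 ∣ C)
    (hCdeg : C.natDegree < 2 * B.natDegree) :
    Submodule.span (Polynomial K)
        {u : AdjoinRoot ((Polynomial.X : Polynomial (Polynomial K)) ^ 2 +
          Polynomial.C B * Polynomial.X + Polynomial.C C) | IsUnit u} = ⊤ ↔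
      ∃ (μ : K) (a : Polynomial K), μ ≠ 0 ∧ a ^ 2 + B * a + C = Polynomial.C μ := by
  constructor
  · intro htop
    have hω : (Polynomial.eval₂ (algebraMap (Polynomial K) (QuadraticAlgebra (Polynomial K) (-C) (-B)))
        QuadraticAlgebra.omega ((Polynomial.X : Polynomial (Polynomial K)) ^ 2 +
          Polynomial.C B * Polynomial.X + Polynomial.C C)) = 0 := by
      simp only [Polynomial.eval₂_add, Polynomial.eval₂_mul, Polynomial.eval₂_pow,
        Polynomial.eval₂_X, Polynomial.eval₂_C]
      ext <;> simp [pow_two]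
    let φ := AdjoinRoot.liftAlgHom ((Polynomial.X : Polynomial (Polynomial K)) ^ 2 +
          Polynomial.C B * Polynomial.X + Polynomial.C C)
          (Algebra.ofId (Polynomial K) (QuadraticAlgebra (Polynomial K) (-C) (-B)))
          QuadraticAlgebra.omega hω
    have hφr : φ (AdjoinRoot.root _) = QuadraticAlgebra.omega := AdjoinRoot.liftAlgHom_root ..
    refine gu_forward B C hB0 hBdeg hCdeg
      {p | ∃ u, IsUnit u ∧ p = ((φ u).re, (φ u).im)} ?_ ?_
    · rintro p ⟨u, hu, rfl⟩
      have h1 : IsUnit (QuadraticAlgebra.norm (φ u)) := (hu.map φ).map _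
      obtain ⟨c, hc, h⟩ := Polynomial.isUnit_iff.mp h1
      refine ⟨c, hc.ne_zero, ?_⟩
      rw [h, QuadraticAlgebra.norm_def]
      ring
    · intro d hd
      have hall : ∀ z ∈ Submodule.span (Polynomial K)
        {u : AdjoinRoot ((Polynomial.X : Polynomial (Polynomial K)) ^ 2 +
          Polynomial.C B * Polynomial.X + Polynomial.C C) | IsUnit u}, d ∣ (φ z).im := by
        intro z hz
        induction hz using Submodule.span_induction with
        | mem u hu => exact hd _ ⟨u, hu, rfl⟩
        | zero => simp
        | add x y _ _ hx hy =>
          rw [map_add, QuadraticAlgebra.im_add]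
          exact dvd_add hx hy
        | smul r x _ hx =>
          rw [map_smul, QuadraticAlgebra.im_smul]
          exact hx.mul_left _
      have := hall (AdjoinRoot.root _) (by rw [htop]; trivial)
      rw [hφr] at this
      exact isUnit_of_dvd_one this
  · rintro ⟨μ, a, hμ, h⟩
    rw [eq_top_iff]
    set P := ((Polynomial.X : Polynomial (Polynomial K)) ^ 2 +
          Polynomial.C B * Polynomial.X + Polynomial.C C) with hP
    set S := Submodule.span (Polynomial K) {u : AdjoinRoot P | IsUnit u} with hS
    have hroot : (AdjoinRoot.root P) ^ 2 + AdjoinRoot.of P B * AdjoinRoot.root P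
        + AdjoinRoot.of P C = 0 := by
      have := AdjoinRoot.eval₂_root P
      conv at this => lhs; arg 3; rw [hP]
      simpa using this
    have hone : (1 : AdjoinRoot P) ∈ S := Submodule.subset_span isUnit_one
    have hof : ∀ r : Polynomial K, AdjoinRoot.of P r ∈ S := by
      intro r
      have := S.smul_mem r hone
      rwa [Algebra.smul_def, mul_one] at this
    have hu : IsUnit (AdjoinRoot.root P - AdjoinRoot.of P a) := by
      have h2 : IsUnit (-(AdjoinRoot.of P (Polynomial.C μ))) :=
        ((Polynomial.isUnit_C.mpr hμ.isUnit).map _).neg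
      refine isUnit_of_dvd_unit
        ⟨AdjoinRoot.root P + AdjoinRoot.of P a + AdjoinRoot.of P B, ?_⟩ h2
      rw [← h]
      simp only [map_add, map_mul, map_pow]
      linear_combination -hroot
    have hr : AdjoinRoot.root P ∈ S := by
      have := S.add_mem (Submodule.subset_span hu) (hof a)
      simpa using this
    have hmon : P.Monic := by rw [hP]; monicity!
    have hdeg : P.natDegree = 2 := by rw [hP]; compute_degree!
    intro z _
    obtain ⟨p, rfl⟩ := AdjoinRoot.mk_surjective z
    have hp : AdjoinRoot.mk P p = AdjoinRoot.mk P (p %ₘ P) := by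
      conv_lhs => rw [← Polynomial.modByMonic_add_div p P]
      simp
    have hd : (p %ₘ P).natDegree ≤ 1 := by
      have := Polynomial.natDegree_modByMonic_lt p hmon (by
        intro h1; rw [h1] at hdeg; simp at hdeg)
      omega
    rw [hp, Polynomial.eq_X_add_C_of_natDegree_le_one hd]
    rw [map_add, map_mul, AdjoinRoot.mk_X, AdjoinRoot.mk_C, AdjoinRoot.mk_C]
    refine S.add_mem ?_ (hof _)
    have := S.smul_mem ((p %ₘ P).coeff 1) hr
    rwa [Algebra.smul_def] at this
end

section
/- Let K be a finite field of characteristic 2, and let B, C ∈ K[X] be nonzero polynomials such that B is monic of degree at least 2, every irreducible factor of B divides C exactly once (i.e., every prime factor of B is a simple prime factor of C), and deg C < 2·deg B. Let R := K[x][y] = K[X,Y]/(Y² + B(X)Y + C(X)), regarded as a module over K[x], and suppose R is generated by its units as a K[x]-module. Then there exists a polynomial a ∈ K[X] such that a(x) + y is a unit of R and every unit of R has the form λ·(a(x) + y)^n for some nonzero λ ∈ K and some integer n (where negative powers are taken in the unit group of R). -/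
open Polynomial in
lemma fu_descent {K : Type*} [Field K] (h2 : (2 : K[X]) = 0) (B D a b a0 b0 : K[X])
    (hB : 2 ≤ B.natDegree) (hN : IsUnit (a ^ 2 + a * b * B + b ^ 2 * D))
    (hN0 : IsUnit (a0 ^ 2 + a0 * b0 * B + b0 ^ 2 * D)) (hb : b ≠ 0) (hb0 : b0 ≠ 0)
    (hle : b0.natDegree ≤ b.natDegree) :
    (a * b0 + b * a0).degree < b.degree ∨ (a * b0 + b * a0 + b * b0 * B).degree < b.degree := by
  have hB0 : B ≠ 0 := by rintro rfl; simp at hB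
  by_contra! hcon
  obtain ⟨hP, hQ⟩ := hcon
  have hPQ : (a * b0 + b * a0) * (a * b0 + b * a0 + b * b0 * B) =
      (a ^ 2 + a * b * B + b ^ 2 * D) * b0 ^ 2 + (a0 ^ 2 + a0 * b0 * B + b0 ^ 2 * D) * b ^ 2 := by
    linear_combination (a * b0 * b * a0 - b ^ 2 * b0 ^ 2 * D) * h2
  have hsum : (a * b0 + b * a0) + (a * b0 + b * a0 + b * b0 * B) = b * b0 * B := by
    linear_combination (a * b0 + b * a0) * h2
  generalize (a * b0 + b * a0 + b * b0 * B) = Q at *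
  generalize (a * b0 + b * a0) = P at *
  generalize (a ^ 2 + a * b * B + b ^ 2 * D) = N at *
  generalize (a0 ^ 2 + a0 * b0 * B + b0 ^ 2 * D) = N0 at *
  have hP0 : P ≠ 0 := by
    rintro rfl; simp [hb] at hP
  have hQ0 : Q ≠ 0 := by
    rintro rfl; simp [hb] at hQ
  have e1 := natDegree_le_natDegree hP
  have e2 := natDegree_le_natDegree hQ
  have e3 : P.natDegree + Q.natDegree ≤ 2 * b.natDegree := by
    rw [← natDegree_mul hP0 hQ0, hPQ]
    refine (natDegree_add_le _ _).trans (max_le ?_ ?_)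
    · refine natDegree_mul_le.trans ?_
      rw [natDegree_eq_zero_of_isUnit hN, natDegree_pow]; omega
    · refine natDegree_mul_le.trans ?_
      rw [natDegree_eq_zero_of_isUnit hN0, natDegree_pow]; omega
  have e4 : b.natDegree + b0.natDegree + B.natDegree ≤ max P.natDegree Q.natDegree := by
    rw [← natDegree_mul hb hb0, ← natDegree_mul (mul_ne_zero hb hb0) hB0, ← hsum]
    exact natDegree_add_le _ _
  rcases le_max_iff.mp e4 with h | h <;> omega

open Polynomial in
lemma fu_dvd {K : Type*} [Field K] (h2 : (2 : K[X]) = 0) (B D a0 b0 : K[X])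
    (hB : 2 ≤ B.natDegree)
    (hN0 : IsUnit (a0 ^ 2 + a0 * b0 * B + b0 ^ 2 * D)) (hb0 : b0 ≠ 0)
    (hmin : ∀ a b : K[X], IsUnit (a ^ 2 + a * b * B + b ^ 2 * D) → b ≠ 0 →
      b0.natDegree ≤ b.natDegree) (n : ℕ) :
    ∀ a b : K[X], IsUnit (a ^ 2 + a * b * B + b ^ 2 * D) → b.degree < (n : WithBot ℕ) →
      b0 ∣ b := by
  have hcop : IsCoprime b0 a0 := by
    obtain ⟨v, hv⟩ := hN0.exists_left_inv
    exact ⟨v * (a0 * B + b0 * D), v * a0, by linear_combination hv⟩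
  induction n with
  | zero =>
    intro a b _ hd
    have : b = 0 := by simpa using hd
    simp [this]
  | succ n ih =>
    intro a b hN hd
    by_cases hb : b = 0
    · simp [hb]
    have hlt : ∀ P : K[X], P.degree < b.degree → P.degree < (n : WithBot ℕ) := by
      intro P hP
      by_cases hP0 : P = 0
      · subst hP0; rw [degree_zero]; exact WithBot.bot_lt_coe n
      rw [degree_eq_natDegree hP0, degree_eq_natDegree hb] at *
      have h3 : P.natDegree < b.natDegree := by exact_mod_cast hP
      have h4 : b.natDegree < n + 1 := by exact_mod_cast hd
      exact_mod_cast (by omega : P.natDegree < n)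
    have hs : b0 ∣ a * b0 + b * a0 := by
      rcases fu_descent h2 B D a b a0 b0 hB hN hN0 hb hb0 (hmin a b hN hb) with h | h
      · refine ih (a * (a0 + b0 * B) + b * b0 * D) _ ?_ (hlt _ h)
        convert hN.mul hN0 using 1
        linear_combination (2 * (a * b * a0 * b0 * D) + a * b0 ^ 2 * B * b * D + a ^ 2 * a0 * b0 * B +
          a ^ 2 * b0 ^ 2 * B ^ 2) * h2
      · have := ih (a * a0 + b * b0 * D) _ ?_ (hlt _ h)
        · rw [show a * b0 + b * a0 = (a * b0 + b * a0 + b * b0 * B) - b0 * (b * B) by ring]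
          exact dvd_sub this (dvd_mul_right _ _)
        · convert hN.mul hN0 using 1
          linear_combination (2 * (a * b * a0 * b0 * D) + a * b * b0 ^ 2 * D * B +
            a0 * b ^ 2 * b0 * D * B + b ^ 2 * b0 ^ 2 * D * B ^ 2) * h2
    have : b0 ∣ b * a0 := (dvd_add_right (dvd_mul_left b0 a)).mp hs
    exact hcop.dvd_of_dvd_mul_right this

open Polynomial in
lemma fu_core {K : Type*} [Field K] (h2 : (2 : K[X]) = 0) (B D : K[X])
    (hB : 2 ≤ B.natDegree) {R : Type*} [CommRing R] [Algebra K[X] R] (y : R)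
    (hy : y ^ 2 + algebraMap K[X] R B * y + algebraMap K[X] R D = 0)
    (hex : ∀ z : R, ∃ a b : K[X], z = algebraMap K[X] R a + algebraMap K[X] R b * y)
    (huniq : ∀ a b : K[X], algebraMap K[X] R a + algebraMap K[X] R b * y = 0 → a = 0 ∧ b = 0)
    (hgen : Submodule.span K[X] {u : R | IsUnit u} = ⊤) :
    ∃ (a : K[X]) (ε : Rˣ), (ε : R) = algebraMap K[X] R a + y ∧
      ∀ u : Rˣ, ∃ (l : K) (n : ℤ), l ≠ 0 ∧
        (u : R) = algebraMap K[X] R (C l) * ((ε ^ n : Rˣ) : R) := by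
  have h2R : (2 : R) = 0 := by
    have := congrArg (algebraMap K[X] R) h2
    rwa [map_ofNat, map_zero] at this
  have huniq' : ∀ a b a' b' : K[X], algebraMap K[X] R a + algebraMap K[X] R b * y =
      algebraMap K[X] R a' + algebraMap K[X] R b' * y → a = a' ∧ b = b' := by
    intro a b a' b' h
    have := huniq (a - a') (b - b') (by simp only [map_sub]; linear_combination h)
    exact ⟨sub_eq_zero.mp this.1, sub_eq_zero.mp this.2⟩
  -- norms of units
  have hnorm : ∀ a b : K[X], IsUnit (algebraMap K[X] R a + algebraMap K[X] R b * y) →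
      IsUnit (a ^ 2 + a * b * B + b ^ 2 * D) := by
    intro a b hu
    obtain ⟨v, hv⟩ := hu.exists_right_inv
    obtain ⟨a', b', rfl⟩ := hex v
    obtain ⟨e1, e2⟩ := huniq' (a * a' + b * b' * D) (a * b' + b * a' + b * b' * B) 1 0 (by
      simp only [map_add, map_mul, map_one, map_zero]
      linear_combination hv - algebraMap K[X] R b * algebraMap K[X] R b' * hy +
        algebraMap K[X] R b * algebraMap K[X] R b' *
          (algebraMap K[X] R D + algebraMap K[X] R B * y) * h2R)
    refine IsUnit.of_mul_eq_one (a' ^ 2 + a' * b' * B + b' ^ 2 * D) ?_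
    have key : (a ^ 2 + a * b * B + b ^ 2 * D) * (a' ^ 2 + a' * b' * B + b' ^ 2 * D) =
      (a * a' + b * b' * D) ^ 2 + (a * a' + b * b' * D) * (a * b' + b * a' + b * b' * B) * B
       + (a * b' + b * a' + b * b' * B) ^ 2 * D := by
      linear_combination -(2 * (a * b * a' * b' * D) + a * b * b' ^ 2 * D * B +
            a' * b ^ 2 * b' * D * B + b ^ 2 * b' ^ 2 * D * B ^ 2) * h2
    rw [key, e1, e2]; ring
  -- generation
  have hd : ∀ d : K[X], (∀ a b : K[X],
      IsUnit (algebraMap K[X] R a + algebraMap K[X] R b * y) → d ∣ b) → IsUnit d := by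
    intro d h
    let S : Submodule K[X] R :=
      { carrier := {z | ∃ a b : K[X], z = algebraMap K[X] R a + algebraMap K[X] R (d * b) * y}
        add_mem' := by
          rintro _ _ ⟨a, b, rfl⟩ ⟨a', b', rfl⟩
          exact ⟨a + a', b + b', by simp only [map_add, map_mul]; ring⟩
        zero_mem' := ⟨0, 0, by simp⟩
        smul_mem' := by
          rintro c _ ⟨a, b, rfl⟩
          exact ⟨c * a, c * b, by simp only [Algebra.smul_def, map_mul]; ring⟩ }
    have hS : Submodule.span K[X] {u : R | IsUnit u} ≤ S := by
      rw [Submodule.span_le]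
      intro u hu
      obtain ⟨a, b, rfl⟩ := hex u
      obtain ⟨c, rfl⟩ := h a b hu
      exact ⟨a, c, rfl⟩
    have : y ∈ S := hS (by rw [hgen]; trivial)
    obtain ⟨a, b, hab⟩ := this
    obtain ⟨-, e⟩ := huniq' a (d * b) 0 1 (by rw [← hab]; simp)
    exact IsUnit.of_mul_eq_one b e
  -- a nontrivial unit
  have hnt : ∃ n : ℕ, ∃ a b : K[X], IsUnit (a ^ 2 + a * b * B + b ^ 2 * D) ∧ b ≠ 0 ∧
      b.natDegree = n := by
    by_contra hcon
    push Not at hcon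
    refine not_isUnit_zero (hd 0 fun a b hu => ?_)
    by_contra hb
    rw [zero_dvd_iff] at hb
    exact hcon _ a b (hnorm a b hu) hb rfl
  classical
  obtain ⟨a1, b1, hN1, hb1, hdeg1⟩ := Nat.find_spec hnt
  have hmin : ∀ a b : K[X], IsUnit (a ^ 2 + a * b * B + b ^ 2 * D) → b ≠ 0 →
      b1.natDegree ≤ b.natDegree := by
    intro a b hN hb
    rw [hdeg1]
    exact Nat.find_min' hnt ⟨a, b, hN, hb, rfl⟩
  have hb1u : IsUnit b1 := by
    refine hd b1 fun a b hu => ?_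
    refine fu_dvd h2 B D a1 b1 hB hN1 hb1 hmin (b.natDegree + 1) a b (hnorm a b hu) ?_
    refine lt_of_le_of_lt degree_le_natDegree ?_
    exact_mod_cast Nat.lt_succ_self _
  obtain ⟨b', hb'⟩ := hb1u.exists_right_inv
  have hN0 : IsUnit ((a1 * b') ^ 2 + (a1 * b') * 1 * B + 1 ^ 2 * D) := by
    have hu : IsUnit b' := IsUnit.of_mul_eq_one b1 (by rw [mul_comm]; exact hb')
    convert (hu.pow 2).mul hN1 using 1
    linear_combination -(a1 * b' * B + (b1 * b' + 1) * D) * hb'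
  generalize a1 * b' = a0 at hN0
  obtain ⟨v, hv⟩ := hN0.exists_right_inv
  have hvR := congrArg (algebraMap K[X] R) hv
  simp only [map_add, map_mul, map_one, map_pow] at hvR
  have hinv : (algebraMap K[X] R a0 + y) *
      (algebraMap K[X] R v * (algebraMap K[X] R (a0 + B) + y)) = 1 := by
    simp only [map_add]
    linear_combination hvR + algebraMap K[X] R v * hy +
      algebraMap K[X] R v * (algebraMap K[X] R a0 * y - algebraMap K[X] R D) * h2R
  let ε : Rˣ := ⟨algebraMap K[X] R a0 + y, _, hinv, by rw [mul_comm]; exact hinv⟩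
  refine ⟨a0, ε, rfl, ?_⟩
  have main : ∀ n : ℕ, ∀ (u : Rˣ) (a b : K[X]),
      (u : R) = algebraMap K[X] R a + algebraMap K[X] R b * y → b.degree < (n : WithBot ℕ) →
      ∃ (l : K) (n : ℤ), l ≠ 0 ∧
        (u : R) = algebraMap K[X] R (C l) * ((ε ^ n : Rˣ) : R) := by
    intro n
    induction n with
    | zero =>
      intro u a b hu hdeg
      have hb : b = 0 := by simpa using hdeg
      subst hb
      have hN := hnorm a 0 (hu ▸ u.isUnit)
      have ha : IsUnit a := by
        have : IsUnit (a ^ 2) := by simpa using hN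
        exact (isUnit_pow_iff two_ne_zero).mp this
      obtain ⟨l, hl, rfl⟩ := Polynomial.isUnit_iff.mp ha
      exact ⟨l, 0, hl.ne_zero, by rw [hu]; simp⟩
    | succ n ih =>
      intro u a b hu hdeg
      by_cases hb : b = 0
      · exact ih u a b hu (by subst hb; rw [degree_zero]; exact WithBot.bot_lt_coe n)
      have hN := hnorm a b (hu ▸ u.isUnit)
      have hlt : ∀ P : K[X], P.degree < b.degree → P.degree < (n : WithBot ℕ) := by
        intro P hP
        by_cases hP0 : P = 0
        · subst hP0; rw [degree_zero]; exact WithBot.bot_lt_coe n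
        rw [degree_eq_natDegree hP0, degree_eq_natDegree hb] at *
        have h3 : P.natDegree < b.natDegree := by exact_mod_cast hP
        have h4 : b.natDegree < n + 1 := by exact_mod_cast hdeg
        exact_mod_cast (by omega : P.natDegree < n)
      rcases fu_descent h2 B D a b a0 1 hB hN hN0 hb one_ne_zero (by simp) with h | h
      · obtain ⟨l, m, hl, hm⟩ := ih (u * ε⁻¹) (v * (a * (a0 + B) + b * D))
          (v * (a * 1 + b * a0)) (by
            change (u : R) * (algebraMap K[X] R v * (algebraMap K[X] R (a0 + B) + y)) = _
            rw [hu]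
            simp only [map_add, map_mul, map_one]
            linear_combination algebraMap K[X] R v * algebraMap K[X] R b * hy -
              algebraMap K[X] R v * algebraMap K[X] R b * algebraMap K[X] R D * h2R) (by
            have hvu : IsUnit v := IsUnit.of_mul_eq_one _ (by rw [mul_comm]; exact hv)
            rw [degree_mul, degree_eq_zero_of_isUnit hvu, zero_add]
            exact hlt _ h)
        refine ⟨l, m + 1, hl, ?_⟩
        rw [zpow_add_one, Units.val_mul, ← mul_assoc, ← hm, ← Units.val_mul,
          inv_mul_cancel_right]
      · obtain ⟨l, m, hl, hm⟩ := ih (u * ε) (a * a0 + b * D)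
          (a * 1 + b * a0 + b * 1 * B) (by
            change (u : R) * (algebraMap K[X] R a0 + y) = _
            rw [hu]
            simp only [map_add, map_mul, map_one]
            linear_combination algebraMap K[X] R b * hy -
              algebraMap K[X] R b * (algebraMap K[X] R D + algebraMap K[X] R B * y) * h2R)
          (hlt _ h)
        refine ⟨l, m - 1, hl, ?_⟩
        rw [zpow_sub_one, Units.val_mul, ← mul_assoc, ← hm, ← Units.val_mul,
          mul_inv_cancel_right]
  intro u
  obtain ⟨a, b, hab⟩ := hex u
  refine main (b.natDegree + 1) u a b hab (lt_of_le_of_lt degree_le_natDegree ?_)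
  exact_mod_cast Nat.lt_succ_self _

/-- If the ring `R = K[X,Y]/(Y² + B(X)Y + C(X))` (with `K` a finite field of characteristic
`2` and `B, C` as in the Hasse normal form) is generated by its units as a `K[x]`-module,
then it has a fundamental unit of the form `a(x) + y`: every unit of `R` is
`λ·(a(x) + y)^n` with `λ ∈ K*` and `n ∈ ℤ`. -/
theorem fundamental_unit_char_two
    (K : Type*) [Field K] [Finite K] (hchar : ringChar K = 2)
    (B C : Polynomial K) (hB0 : B ≠ 0) (hC0 : C ≠ 0)
    (hBmonic : B.Monic) (hBdeg : 2 ≤ B.natDegree)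
    (hfac : ∀ q : Polynomial K, Irreducible q → q ∣ B → q ∣ C ∧ ¬ q ^ 2 ∣ C)
    (hCdeg : C.natDegree < 2 * B.natDegree)
    (hgen : Submodule.span (Polynomial K)
      {u : AdjoinRoot ((Polynomial.X : Polynomial (Polynomial K)) ^ 2 +
        Polynomial.C B * Polynomial.X + Polynomial.C C) | IsUnit u} = ⊤) :
    ∃ (a : Polynomial K)
      (ε : (AdjoinRoot ((Polynomial.X : Polynomial (Polynomial K)) ^ 2 +
        Polynomial.C B * Polynomial.X + Polynomial.C C))ˣ),
      (ε : AdjoinRoot ((Polynomial.X : Polynomial (Polynomial K)) ^ 2 +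
          Polynomial.C B * Polynomial.X + Polynomial.C C)) =
          AdjoinRoot.of _ a + AdjoinRoot.root _ ∧
      ∀ u : (AdjoinRoot ((Polynomial.X : Polynomial (Polynomial K)) ^ 2 +
          Polynomial.C B * Polynomial.X + Polynomial.C C))ˣ,
        ∃ (l : K) (n : ℤ), l ≠ 0 ∧
          (u : AdjoinRoot ((Polynomial.X : Polynomial (Polynomial K)) ^ 2 +
            Polynomial.C B * Polynomial.X + Polynomial.C C)) =
            AdjoinRoot.of _ (Polynomial.C l) *
              ((ε ^ n : (AdjoinRoot ((Polynomial.X : Polynomial (Polynomial K)) ^ 2 +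
                Polynomial.C B * Polynomial.X + Polynomial.C C))ˣ) :
                AdjoinRoot ((Polynomial.X : Polynomial (Polynomial K)) ^ 2 +
                  Polynomial.C B * Polynomial.X + Polynomial.C C)) := by
  have h2 : (2 : Polynomial K) = 0 := by
    have : (2 : K) = 0 := by
      have h := ringChar.Nat.cast_ringChar (R := K)
      rw [hchar] at h
      exact_mod_cast h
    have := congrArg (Polynomial.C) this
    rwa [map_ofNat, map_zero] at this
  have hmon : ((Polynomial.X : Polynomial (Polynomial K)) ^ 2 +
        Polynomial.C B * Polynomial.X + Polynomial.C C).Monic := by monicity!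
  have hdegf : ((Polynomial.X : Polynomial (Polynomial K)) ^ 2 +
        Polynomial.C B * Polynomial.X + Polynomial.C C).natDegree = 2 := by compute_degree!
  refine fu_core h2 B C hBdeg (AdjoinRoot.root _) ?_ ?_ ?_ hgen
  · have := AdjoinRoot.eval₂_root ((Polynomial.X : Polynomial (Polynomial K)) ^ 2 +
        Polynomial.C B * Polynomial.X + Polynomial.C C)
    simpa using this
  · intro z
    induction z using AdjoinRoot.induction_on with
    | ih p =>
      have hlt := Polynomial.natDegree_modByMonic_lt p hmon (by
        intro h; rw [h] at hdegf; simp at hdegf)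
      rw [hdegf] at hlt
      obtain ⟨b, a, hab⟩ := Polynomial.exists_eq_X_add_C_of_natDegree_le_one
        (Nat.lt_succ_iff.mp hlt)
      refine ⟨a, b, ?_⟩
      have h1 := Polynomial.modByMonic_add_div p ((Polynomial.X : Polynomial (Polynomial K)) ^ 2 +
        Polynomial.C B * Polynomial.X + Polynomial.C C)
      rw [hab] at h1
      conv_lhs => rw [← h1, map_add, map_mul, AdjoinRoot.mk_self, zero_mul, add_zero]
      simp [AdjoinRoot.algebraMap_eq, add_comm]
  · intro a b h
    have h1 : AdjoinRoot.mk ((Polynomial.X : Polynomial (Polynomial K)) ^ 2 +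
        Polynomial.C B * Polynomial.X + Polynomial.C C)
        (Polynomial.C b * Polynomial.X + Polynomial.C a) = 0 := by
      rw [← h]
      simp [AdjoinRoot.algebraMap_eq, add_comm]
    rw [AdjoinRoot.mk_eq_zero] at h1
    have h3 : (Polynomial.C b * Polynomial.X + Polynomial.C a) = 0 := by
      by_contra hne
      have h4 := hmon.not_dvd_of_natDegree_lt hne
        (by rw [hdegf]; exact Nat.lt_succ_iff.mpr Polynomial.natDegree_linear_le)
      exact h4 h1
    have c0 := congrArg (fun p => Polynomial.coeff p 0) h3
    have c1 := congrArg (fun p => Polynomial.coeff p 1) h3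
    simp at c0 c1
    exact ⟨c0, c1⟩
end

section
/- Let K be a finite field of characteristic 2, and let B, C ∈ K[X] be nonzero polynomials with B monic, deg B ≥ 2, and deg C < 2·deg B. Let a ∈ K[X] be a polynomial such that a² + a·B + C is a nonzero constant. Define sequences of polynomials a_n, b_n ∈ K[X] by a_0 = 1, b_0 = 0, a_{n+1} = a·a_n + C·b_n, and b_{n+1} = a·b_n + a_n + b_n·B. Then for every positive integer n, deg a_n ≤ n·deg B, and b_n is nonzero with deg b_n = (n − 1)·deg B. -/
/-- Degrees of the coordinate polynomials of powers of a unit `a(x) + y` in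
`K[X,Y]/(Y² + B(X)Y + C(X))` in characteristic `2`: `deg a_n ≤ n·deg B` and
`deg b_n = (n-1)·deg B`. -/
theorem degrees_of_unit_powers_char_two
    (K : Type*) [Field K] [Finite K] (hchar : ringChar K = 2)
    (B C : Polynomial K) (hB0 : B ≠ 0) (hC0 : C ≠ 0)
    (hBmonic : B.Monic) (hBdeg : 2 ≤ B.natDegree)
    (hCdeg : C.natDegree < 2 * B.natDegree)
    (a : Polynomial K) (ha : ∃ μ : K, μ ≠ 0 ∧ a ^ 2 + a * B + C = Polynomial.C μ)
    (A b : ℕ → Polynomial K) (hA0 : A 0 = 1) (hb0 : b 0 = 0)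
    (hA : ∀ n, A (n + 1) = a * A n + C * b n)
    (hb : ∀ n, b (n + 1) = a * b n + A n + b n * B) :
    ∀ n : ℕ, 0 < n →
      (A n).natDegree ≤ n * B.natDegree ∧
      b n ≠ 0 ∧ (b n).natDegree = (n - 1) * B.natDegree := by
  obtain ⟨μ, hμ, hN⟩ := ha
  have h2K : (2 : K) = 0 := by
    have h := ringChar.Nat.cast_ringChar (R := K)
    rw [hchar] at h
    exact_mod_cast h
  have h2 : (2 : Polynomial K) = 0 := by
    rw [← map_ofNat (Polynomial.C : K →+* Polynomial K) 2]
    exact (congrArg (Polynomial.C : K → Polynomial K) h2K).trans (map_zero _)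
  have hrec : ∀ n, b (n + 2) = B * b (n + 1) + -(Polynomial.C μ * b n) := by
    intro n
    have e1 := hb (n + 1)
    have e2 := hA n
    have e3 := hb n
    rw [← hN]
    linear_combination e1 + e2 - a * e3 + (a * b (n + 1) + C * b n) * h2
  have hmain : ∀ n, (b (n + 1)).Monic ∧ (b (n + 1)).natDegree = n * B.natDegree ∧
      (b n).degree < (b (n + 1)).degree := by
    intro n
    induction n with
    | zero =>
      have h1 : b (0 + 1) = 1 := by rw [hb, hA0, hb0]; ring
      rw [h1, hb0]
      simp [Polynomial.monic_one]
    | succ n ih =>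
      obtain ⟨hm, hd, hlt⟩ := ih
      have hm' : (B * b (n + 1)).Monic := hBmonic.mul hm
      have hBd : (b (n + 1)).degree < (B * b (n + 1)).degree := by
        apply Polynomial.degree_lt_degree
        rw [hBmonic.natDegree_mul hm]
        omega
      have hq : (-(Polynomial.C μ * b n)).degree < (B * b (n + 1)).degree := by
        rw [Polynomial.degree_neg, Polynomial.degree_C_mul hμ]
        exact hlt.trans hBd
      rw [show n + 1 + 1 = n + 2 from rfl, hrec n]
      refine ⟨hm'.add_of_left hq, ?_, ?_⟩
      · rw [Polynomial.natDegree_add_eq_left_of_degree_lt hq, hBmonic.natDegree_mul hm, hd]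
        ring
      · rw [Polynomial.degree_add_eq_left_of_degree_lt hq]
        exact hBd
  have hadeg : a.natDegree ≤ B.natDegree := by
    by_contra! hlt
    have e : a ^ 2 = Polynomial.C μ - a * B - C := by rw [← hN]; ring
    have hd : (a ^ 2).natDegree ≤ a.natDegree + B.natDegree ∨
        (a ^ 2).natDegree ≤ C.natDegree := by
      have h1 := Polynomial.natDegree_sub_le (Polynomial.C μ - a * B) C
      have h3 := Polynomial.natDegree_sub_le (Polynomial.C μ) (a * B)
      have h4 := Polynomial.natDegree_mul_le (p := a) (q := B)
      rw [Polynomial.natDegree_C] at h3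
      rw [← e] at h1
      omega
    rw [Polynomial.natDegree_pow] at hd
    omega
  intro n hn
  obtain ⟨m, rfl⟩ : ∃ m, n = m + 1 := ⟨n - 1, by omega⟩
  obtain ⟨hm, hd, -⟩ := hmain m
  obtain ⟨-, hd', -⟩ := hmain (m + 1)
  refine ⟨?_, hm.ne_zero, by simpa using hd⟩
  have e : A (m + 1) = b (m + 1 + 1) - (a + B) * b (m + 1) := by rw [hb (m + 1)]; ring
  rw [e]
  refine (Polynomial.natDegree_sub_le _ _).trans (max_le hd'.le ?_)
  refine Polynomial.natDegree_mul_le.trans ?_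
  have h5 := Polynomial.natDegree_add_le a B
  rw [hd, add_mul, one_mul]
  omega
end

section
/- Let K be a finite field of characteristic 2, let B_1, …, B_r ∈ K[X] (r ≥ 1) be pairwise distinct monic irreducible polynomials, let n_1, …, n_r be positive integers, and let D ∈ K[X] be a nonzero polynomial not divisible by any B_i. Put B := B_1^{n_1} ⋯ B_r^{n_r} and C := D·B_1 ⋯ B_r. Then the ring R := K[X,Y]/(Y² + B(X)·Y + C(X)) is an integral domain which is integrally closed in its fraction field; equivalently, R equals the integral closure of K[x] in the quadratic function field F = K(x)(y) defined by y² + B(x)y + C(x) = 0. -/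
section HasseHelpers

open Polynomial

theorem hasse_field_aux {F : Type*} [Field F] (a b c : F) (h : a ≠ 0) :
    a * c * (b / a) = b * c := by
  field_simp

theorem hasse_dvd_aux {A F : Type*} [CommRing A] [IsDomain A] [IsIntegrallyClosed A] [Field F]
    [Algebra A F] (hinj : Function.Injective (algebraMap A F)) (a b : A) (ha : a ≠ 0) (t : F)
    (ht : IsIntegral A t) (h : algebraMap A F a * t = algebraMap A F b) : a ∣ b := by
  have : FaithfulSMul A F := (faithfulSMul_iff_algebraMap_injective A F).2 hinj
  let Q := FractionRing A
  let : Algebra Q F := FractionRing.liftAlgebra A F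
  have : IsScalarTower A Q F := FractionRing.isScalarTower_liftAlgebra A F
  have hQA : algebraMap A Q a ≠ 0 := by
    simpa using ha
  have haF : algebraMap A F a ≠ 0 := by
    rw [Ne, map_eq_zero_iff _ hinj]; exact ha
  have ht' : t = algebraMap Q F (algebraMap A Q b / algebraMap A Q a) := by
    rw [map_div₀, ← IsScalarTower.algebraMap_apply, ← IsScalarTower.algebraMap_apply, ← h]
    field_simp
  rw [ht', isIntegral_algebraMap_iff (algebraMap Q F).injective] at ht
  obtain ⟨c, hc⟩ := IsIntegrallyClosed.isIntegral_iff.1 ht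
  refine ⟨c, ?_⟩
  apply IsFractionRing.injective A Q
  rw [map_mul, hc]
  have := hasse_field_aux (algebraMap A Q a) (algebraMap A Q b) 1 hQA
  rw [mul_one, mul_one] at this
  exact this.symm

theorem hasse_prime_aux {A F : Type*} [CommRing A] [IsDomain A] [IsIntegrallyClosed A] [Field F]
    [Algebra A F] (hinj : Function.Injective (algebraMap A F)) (h2 : (2 : A) = 0)
    (B C : A) (hBC : ∀ p : A, Prime p → p ∣ B → p ∣ C ∧ ¬ p ^ 2 ∣ C)
    (y : F) (hy : y ^ 2 + algebraMap A F B * y + algebraMap A F C = 0)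
    (σ : F →ₐ[A] F) (hσ : σ y = - algebraMap A F B - y)
    (p u v : A) (hp : Prime p) (w : F) (hw : IsIntegral A w)
    (h : algebraMap A F p * w = algebraMap A F u + algebraMap A F v * y) :
    p ∣ u ∧ p ∣ v := by
  have hσw : IsIntegral A (σ w) := hw.map σ
  have h' : algebraMap A F p * σ w = algebraMap A F u + algebraMap A F v *
      (- algebraMap A F B - y) := by
    have := congrArg σ h
    simpa [hσ] using this
  have hT : p ∣ 2 * u - v * B := by
    refine hasse_dvd_aux hinj _ _ hp.ne_zero (w + σ w) (hw.add hσw) ?_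
    rw [mul_add, h, h']
    simp only [map_sub, map_mul, map_ofNat]
    ring
  have hN : p ^ 2 ∣ u ^ 2 - u * v * B + v ^ 2 * C := by
    refine hasse_dvd_aux hinj _ _ (pow_ne_zero 2 hp.ne_zero) (w * σ w) (hw.mul hσw) ?_
    have : algebraMap A F (p ^ 2) * (w * σ w)
      = (algebraMap A F p * w) * (algebraMap A F p * σ w) := by
      rw [map_pow]; ring
    rw [this, h, h']
    simp only [map_sub, map_mul, map_add, map_pow]
    linear_combination (- (algebraMap A F v) ^ 2) * hy
  rw [h2, zero_mul, zero_sub, dvd_neg] at hT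
  have hN1 : p ∣ u ^ 2 - u * v * B + v ^ 2 * C := (dvd_pow_self p two_ne_zero).trans hN
  by_cases hpB : p ∣ B
  · obtain ⟨⟨C', rfl⟩, hC2⟩ := hBC p hp hpB
    obtain ⟨B', rfl⟩ := hpB
    have hu : p ∣ u := by
      apply hp.dvd_of_dvd_pow (n := 2)
      have e : u ^ 2 = (u ^ 2 - u * v * (p * B') + v ^ 2 * (p * C'))
        + p * (u * v * B' - v ^ 2 * C') := by ring
      rw [e]
      exact dvd_add hN1 (dvd_mul_right _ _)
    refine ⟨hu, ?_⟩
    obtain ⟨u', rfl⟩ := hu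
    have hC' : ¬ p ∣ C' := by
      rintro ⟨c, rfl⟩
      exact hC2 ⟨c, by ring⟩
    obtain ⟨k, hk⟩ := hN
    have : p ∣ v ^ 2 * C' := by
      refine ⟨k - u' ^ 2 + u' * v * B', ?_⟩
      apply mul_left_cancel₀ hp.ne_zero
      linear_combination hk
    exact hp.dvd_of_dvd_pow ((hp.dvd_or_dvd this).resolve_right hC')
  · have hv : p ∣ v := (hp.dvd_or_dvd hT).resolve_right hpB
    refine ⟨?_, hv⟩
    obtain ⟨v', rfl⟩ := hv
    apply hp.dvd_of_dvd_pow (n := 2)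
    have e : u ^ 2 = (u ^ 2 - u * (p * v') * B + (p * v') ^ 2 * C)
      + p * (u * v' * B - p * v' ^ 2 * C) := by ring
    rw [e]
    exact dvd_add hN1 (dvd_mul_right _ _)

theorem hasse_descent_aux {A F : Type*} [CommRing A] [IsDomain A] [UniqueFactorizationMonoid A]
    [Field F]
    [Algebra A F] (hinj : Function.Injective (algebraMap A F)) (h2 : (2 : A) = 0)
    (B C : A) (hBC : ∀ p : A, Prime p → p ∣ B → p ∣ C ∧ ¬ p ^ 2 ∣ C)
    (y : F) (hy : y ^ 2 + algebraMap A F B * y + algebraMap A F C = 0)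
    (σ : F →ₐ[A] F) (hσ : σ y = - algebraMap A F B - y)
    (w : F) (hw : IsIntegral A w) (d : A) (hd : d ≠ 0) : ∀ (u v : A)
    (_ : algebraMap A F d * w = algebraMap A F u + algebraMap A F v * y),
    ∃ u v : A, w = algebraMap A F u + algebraMap A F v * y := by
  induction d using UniqueFactorizationMonoid.induction_on_prime with
  | h₁ => exact absurd rfl hd
  | h₂ x hx =>
    intro u v h
    obtain ⟨c, hc⟩ := hx.exists_left_inv
    refine ⟨c * u, c * v, ?_⟩
    have : algebraMap A F c * algebraMap A F x = 1 := by rw [← map_mul, hc, map_one]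
    simp only [map_mul]
    linear_combination (algebraMap A F c) * h - w * this
  | h₃ a p ha hp ih =>
    intro u v h
    obtain ⟨⟨u', rfl⟩, ⟨v', rfl⟩⟩ := hasse_prime_aux hinj h2 B C hBC y hy σ hσ p u v hp
      (algebraMap A F a * w) (isIntegral_algebraMap.mul hw)
      (by rw [← h, map_mul]; ring)
    refine ih ha u' v' ?_
    have hpF : algebraMap A F p ≠ 0 := by
      rw [Ne, map_eq_zero_iff _ hinj]; exact hp.ne_zero
    apply mul_left_cancel₀ hpF
    simp only [map_mul] at h
    linear_combination h

theorem hasse_general {A : Type*} [CommRing A] [IsDomain A] [UniqueFactorizationMonoid A]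
    (h2 : (2 : A) = 0) (B C : A) (hBC : ∀ p : A, Prime p → p ∣ B → p ∣ C ∧ ¬ p ^ 2 ∣ C)
    (hex : ∃ p : A, Prime p ∧ p ∣ B) (f : A[X])
    (hf : f = (X : A[X]) ^ 2 + Polynomial.C B * X + Polynomial.C C) :
    IsDomain (AdjoinRoot f) ∧ IsIntegrallyClosed (AdjoinRoot f) := by
  have hdeg : f.natDegree = 2 := by rw [hf]; compute_degree!
  have hmon : f.Monic := by rw [hf]; monicity!
  have hirr : Irreducible f := by
    obtain ⟨p, hp, hpB⟩ := hex
    obtain ⟨hpC, hpC2⟩ := hBC p hp hpB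
    have hprime : (Ideal.span {p}).IsPrime := (Ideal.span_singleton_prime hp.ne_zero).2 hp
    refine Polynomial.IsEisensteinAt.irreducible (𝓟 := Ideal.span {p}) ?_ hprime
      hmon.isPrimitive (by omega)
    refine ⟨?_, ?_, ?_⟩
    · rw [hmon.leadingCoeff]
      exact fun h => hprime.ne_top ((Ideal.eq_top_iff_one _).2 h)
    · intro k hk
      rw [hdeg] at hk
      rw [Ideal.mem_span_singleton]
      interval_cases k
      · simpa [hf] using hpC
      · simpa [hf, coeff_X, coeff_C] using hpB
    · rw [Ideal.span_singleton_pow, Ideal.mem_span_singleton]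
      simpa [hf] using hpC2
  have hdom : IsDomain (AdjoinRoot f) := AdjoinRoot.isDomain_of_prime hirr.prime
  refine ⟨hdom, ?_⟩
  set y : AdjoinRoot f := AdjoinRoot.root f with hydef
  have hy : y ^ 2 + algebraMap A _ B * y + algebraMap A _ C = 0 := by
    have := AdjoinRoot.eval₂_root f
    rw [hf] at this
    simp only [eval₂_add, eval₂_mul, eval₂_pow, eval₂_X, eval₂_C] at this
    subst hf
    exact this
  have hrep : ∀ s : AdjoinRoot f, ∃ u v : A, s = algebraMap A _ u + algebraMap A _ v * y := by
    intro s
    induction s using AdjoinRoot.induction_on with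
    | ih g =>
      induction g using Polynomial.induction_on' with
      | add g h hg hh =>
        obtain ⟨u, v, h1⟩ := hg
        obtain ⟨u', v', h2⟩ := hh
        refine ⟨u + u', v + v', ?_⟩
        simp only [map_add, h1, h2]; ring
      | monomial n a =>
        induction n with
        | zero => exact ⟨a, 0, by simp [AdjoinRoot.algebraMap_eq]⟩
        | succ n ih =>
          obtain ⟨u, v, h⟩ := ih
          refine ⟨- v * C, u - v * B, ?_⟩
          rw [← monomial_mul_X, map_mul, h, AdjoinRoot.mk_X]
          simp only [map_sub, map_mul, map_neg]
          linear_combination (algebraMap A _ v) * hy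
  have hinj : Function.Injective (algebraMap A (AdjoinRoot f)) :=
    AdjoinRoot.of.injective_of_degree_ne_zero (by
      rw [Polynomial.degree_eq_natDegree hmon.ne_zero, hdeg]; norm_num)
  let σ : AdjoinRoot f →ₐ[A] AdjoinRoot f := AdjoinRoot.liftAlgHom f (Algebra.ofId A _)
    (- algebraMap A _ B - y) (by
      have key : ∀ (φ : A →+* AdjoinRoot f) (z : AdjoinRoot f),
          eval₂ φ z f = z ^ 2 + φ B * z + φ C := by
        intro φ z
        have := congrArg (eval₂ φ z) hf
        simpa only [eval₂_add, eval₂_mul, eval₂_pow, eval₂_X, eval₂_C] using this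
      rw [key]
      change (- algebraMap A _ B - y) ^ 2 + algebraMap A (AdjoinRoot f) B *
        (- algebraMap A _ B - y) + algebraMap A (AdjoinRoot f) C = 0
      linear_combination hy)
  have hσ : σ y = - algebraMap A _ B - y := AdjoinRoot.liftAlgHom_root ..
  have hσσ : ∀ s, σ (σ s) = s := by
    intro s
    obtain ⟨u, v, rfl⟩ := hrep s
    simp only [map_add, map_mul, map_sub, map_neg, hσ, AlgHom.commutes]
    ring
  have hσinj : Function.Injective σ := Function.LeftInverse.injective hσσ
  let F := FractionRing (AdjoinRoot f)
  have hRF : Function.Injective (algebraMap (AdjoinRoot f) F) := IsFractionRing.injective _ _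
  have hAF : Function.Injective (algebraMap A F) := by
    rw [IsScalarTower.algebraMap_eq A (AdjoinRoot f) F]
    exact hRF.comp hinj
  let g : AdjoinRoot f →ₐ[A] F := (IsScalarTower.toAlgHom A (AdjoinRoot f) F).comp σ
  have hg : Function.Injective g := hRF.comp hσinj
  let τ : F →ₐ[A] F := IsFractionRing.liftAlgHom (g := g) hg
  have hτ : τ (algebraMap _ F y) = - algebraMap A F B - algebraMap _ F y := by
    have : τ (algebraMap _ F y) = algebraMap _ F (σ y) :=
      IsFractionRing.lift_algebraMap (g := g.toRingHom) hg y
    rw [this, hσ, map_sub, map_neg, ← IsScalarTower.algebraMap_apply]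
  have hyF : (algebraMap _ F y) ^ 2 + algebraMap A F B * (algebraMap _ F y)
      + algebraMap A F C = 0 := by
    have := congrArg (algebraMap _ F) hy
    simpa only [map_add, map_mul, map_pow, map_zero, ← IsScalarTower.algebraMap_apply] using this
  have : Algebra.IsIntegral A (AdjoinRoot f) := by
    have : Module.Finite A (AdjoinRoot f) := hmon.finite_adjoinRoot
    infer_instance
  rw [isIntegrallyClosed_iff F]
  intro w hw
  have hwA : IsIntegral A w := isIntegral_trans w hw
  obtain ⟨a, s, hs, rfl⟩ := IsFractionRing.div_surjective (A := AdjoinRoot f) w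
  have hs0 : s ≠ 0 := nonZeroDivisors.ne_zero hs
  have hsF : algebraMap _ F s ≠ 0 := by
    rw [Ne, map_eq_zero_iff _ hRF]; exact hs0
  have hN : ∃ d : A, algebraMap A _ d = s * σ s := by
    obtain ⟨u, v, rfl⟩ := hrep s
    refine ⟨u ^ 2 - u * v * B + v ^ 2 * C, ?_⟩
    simp only [map_add, map_mul, map_sub, map_pow, hσ, AlgHom.commutes]
    linear_combination ((algebraMap A _ v) ^ 2) * hy
  obtain ⟨d, hd⟩ := hN
  have hd0 : d ≠ 0 := by
    rintro rfl
    rw [map_zero] at hd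
    rcases mul_eq_zero.1 hd.symm with h | h
    · exact hs0 h
    · exact hs0 (hσinj (by rw [h, map_zero]))
  obtain ⟨u, v, huv⟩ := hrep (a * σ s)
  obtain ⟨u', v', h⟩ := hasse_descent_aux hAF h2 B C hBC _ hyF τ hτ _ hwA d hd0 u v (by
    rw [IsScalarTower.algebraMap_apply A (AdjoinRoot f) F d, hd,
      IsScalarTower.algebraMap_apply A (AdjoinRoot f) F u,
      IsScalarTower.algebraMap_apply A (AdjoinRoot f) F v, ← map_mul, ← map_add, ← huv,
      map_mul, map_mul]
    exact hasse_field_aux _ _ _ hsF)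
  refine ⟨algebraMap A _ u' + algebraMap A _ v' * y, ?_⟩
  rw [h]
  simp only [map_add, map_mul, ← IsScalarTower.algebraMap_apply]

end HasseHelpers

/-- For a finite field `K` of characteristic `2` and `B, C` as in the (modified) Hasse
normal form, the ring `R = K[X,Y]/(Y² + B(X)Y + C(X))` is an integrally closed domain,
i.e. it is the integral closure of `K[x]` in the quadratic function field `K(x)(y)`. -/
theorem hasse_ring_integrally_closed
    (K : Type*) [Field K] [Finite K] (hchar : ringChar K = 2)
    (r : ℕ) (hr : 1 ≤ r) (Bi : Fin r → Polynomial K)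
    (hmonic : ∀ i, (Bi i).Monic) (hirr : ∀ i, Irreducible (Bi i))
    (hdist : Function.Injective Bi)
    (n : Fin r → ℕ) (hn : ∀ i, 0 < n i)
    (D : Polynomial K) (hD : D ≠ 0) (hDnd : ∀ i, ¬ Bi i ∣ D)
    (B C : Polynomial K)
    (hB : B = ∏ i, Bi i ^ n i) (hC : C = D * ∏ i, Bi i) :
    IsDomain (AdjoinRoot ((Polynomial.X : Polynomial (Polynomial K)) ^ 2 +
        Polynomial.C B * Polynomial.X + Polynomial.C C)) ∧
      IsIntegrallyClosed (AdjoinRoot ((Polynomial.X : Polynomial (Polynomial K)) ^ 2 +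
        Polynomial.C B * Polynomial.X + Polynomial.C C)) := by
  classical
  have h2K : (2 : K) = 0 := by
    have := ringChar.Nat.cast_ringChar (R := K)
    rw [hchar] at this
    exact_mod_cast this
  have h2 : (2 : Polynomial K) = 0 := by
    have := congrArg Polynomial.C h2K
    rwa [map_ofNat, map_zero] at this
  refine hasse_general h2 B C ?_ ?_ _ rfl
  · intro p hp hpB
    rw [hB] at hpB
    obtain ⟨i, -, hi⟩ := hp.exists_mem_finset_dvd hpB
    have hass : Associated p (Bi i) :=
      hp.irreducible.associated_of_dvd (hirr i) (hp.dvd_of_dvd_pow hi)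
    have hprod : ∏ j, Bi j = Bi i * ∏ j ∈ Finset.univ.erase i, Bi j :=
      (Finset.mul_prod_erase _ _ (Finset.mem_univ i)).symm
    constructor
    · rw [hass.dvd_iff_dvd_left, hC, hprod]
      exact ⟨D * ∏ j ∈ Finset.univ.erase i, Bi j, by ring⟩
    · rw [(hass.pow_pow (n := 2)).dvd_iff_dvd_left, hC, hprod]
      rintro ⟨k, hk⟩
      have hPi : Prime (Bi i) := (hirr i).prime
      have : Bi i ∣ D * ∏ j ∈ Finset.univ.erase i, Bi j := by
        refine ⟨k, mul_left_cancel₀ hPi.ne_zero ?_⟩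
        linear_combination hk
      rcases hPi.dvd_or_dvd this with h | h
      · exact hDnd i h
      · obtain ⟨j, hj, hij⟩ := hPi.exists_mem_finset_dvd h
        have hassij : Associated (Bi i) (Bi j) := (hirr i).associated_of_dvd (hirr j) hij
        have := Polynomial.eq_of_monic_of_associated (hmonic i) (hmonic j) hassij
        exact (Finset.ne_of_mem_erase hj) (hdist this).symm
  · refine ⟨Bi ⟨0, hr⟩, (hirr _).prime, ?_⟩
    rw [hB]
    exact (dvd_pow_self _ (hn _).ne').trans (Finset.dvd_prod_of_mem _ (Finset.mem_univ _))
end
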